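/- arXiv:1206.4946 — 3 statements merged into one kernel-verified Lean document; each statement's English description precedes it below -/
import Mathlib

section
/- (Gauss's genus theorem.) Let d be a squarefree integer, d ≠ 0, 1, let K = ℚ(√d), let δ_K be the discriminant of K, and let m be the number of distinct rational primes dividing δ_K. Let C_K be the ideal class group of K. Then the order of the quotient C_K/C_K² (C_K modulo its subgroup of squares) equals 2^{m−2} if d > 0 and there exists a prime p ≡ 3 (mod 4) dividing δ_K, and equals 2^{m−1} otherwise. -/
open NumberField IntermediateField

open scoped nonZeroDivisors

/-- In a finite commutative group, there are as many classes modulo `n`-th powers as there are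
elements killed by `n`. -/
theorem card_quotient_range_powMonoidHom {C : Type*} [CommGroup C] [Finite C] (n : ℕ) :
    Nat.card (C ⧸ (powMonoidHom n : C →* C).range) =
      Nat.card (powMonoidHom n : C →* C).ker := by
  rw [← Subgroup.index_eq_card, Subgroup.index_range]

/-- The multiplication-by-two snake lemma for an exact sequence `A → B → C → 1` in which squaring
is injective on `B`, in the form of an index computation. -/
theorem relIndex_sq_comap_sq {A B C : Type*} [CommGroup A] [CommGroup B] [CommGroup C]
    (f : A →* B) (g : B →* C) (hg : Function.Surjective g) (hfg : g.ker = f.range)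
    (hB : Function.Injective (powMonoidHom 2 : B →* B)) :
    (powMonoidHom 2 : A →* A).range.relIndex ((powMonoidHom 2 : B →* B).range.comap f) =
      (powMonoidHom 2 : f.ker →* f.ker).range.index *
        Nat.card (powMonoidHom 2 : C →* C).ker := by
  set SqA := (powMonoidHom 2 : A →* A).range
  set Sel := (powMonoidHom 2 : B →* B).range.comap f
  have h1 : SqA ≤ f.ker ⊔ SqA := le_sup_right
  have h2 : f.ker ⊔ SqA ≤ Sel := by
    refine sup_le (fun x hx => ⟨1, by simp [(MonoidHom.mem_ker).1 hx]⟩) ?_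
    rintro _ ⟨x, rfl⟩
    exact ⟨f x, by simp⟩
  rw [← Subgroup.relIndex_mul_relIndex _ _ _ h1 h2, Subgroup.relIndex_sup_right]
  congr 1
  · rw [Subgroup.relIndex]
    congr 1
    ext ⟨x, hx⟩
    simp only [Subgroup.mem_subgroupOf, SqA, MonoidHom.mem_range, powMonoidHom_apply]
    constructor
    · rintro ⟨y, hy⟩
      refine ⟨⟨y, hB ?_⟩, Subtype.ext hy⟩
      simpa [← map_pow, hy] using hx
    · rintro ⟨y, hy⟩
      exact ⟨y, congrArg Subtype.val hy⟩
  · let e := MonoidHom.ofInjective hB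
    let r : Sel →* B := e.symm.toMonoidHom.comp
      ((f.comp Sel.subtype).codRestrict (powMonoidHom 2 : B →* B).range fun x => x.2)
    have hr (x : Sel) : r x ^ 2 = f x :=
      congrArg Subtype.val (e.apply_symm_apply ⟨f x, x.2⟩)
    have hker : (f.ker ⊔ SqA).subgroupOf Sel = (g.comp r).ker := by
      ext x
      rw [Subgroup.mem_subgroupOf, MonoidHom.mem_ker, MonoidHom.comp_apply, ← MonoidHom.mem_ker,
        hfg, Subgroup.mem_sup]
      constructor
      · rintro ⟨u, hu, _, ⟨y, rfl⟩, hx⟩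
        refine ⟨y, hB ?_⟩
        simp only [powMonoidHom_apply] at hx ⊢
        rw [hr, ← hx, map_mul, (MonoidHom.mem_ker).1 hu, one_mul, map_pow]
      · rintro ⟨y, hy⟩
        refine ⟨x * (y ^ 2)⁻¹, ?_, y ^ 2, ⟨y, rfl⟩, by simp⟩
        rw [MonoidHom.mem_ker, map_mul, map_inv, map_pow, hy, hr, mul_inv_cancel]
    have hrange : (g.comp r).range = (powMonoidHom 2 : C →* C).ker := by
      ext c
      rw [MonoidHom.mem_ker, powMonoidHom_apply]
      constructor
      · rintro ⟨x, rfl⟩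
        rw [MonoidHom.comp_apply, ← map_pow, hr, ← MonoidHom.mem_ker, hfg]
        exact ⟨x, rfl⟩
      · intro hc
        obtain ⟨b, rfl⟩ := hg c
        rw [← map_pow, ← MonoidHom.mem_ker, hfg] at hc
        obtain ⟨x, hx⟩ := hc
        refine ⟨⟨x, b, hx.symm⟩, ?_⟩
        rw [MonoidHom.comp_apply]
        congr 1
        exact hB ((hr _).trans hx)
    rw [Subgroup.relIndex, hker, Subgroup.index_ker, hrange]

theorem Rat.padicValRat_num_mul_den {p : ℕ} [Fact p.Prime] {r : ℚ} (hr : r ≠ 0) :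
    padicValRat p ((r.num * r.den : ℤ) : ℚ) = padicValRat p r + 2 * padicValRat p (r.den : ℚ) := by
  have hden : (r.den : ℚ) ≠ 0 := by exact_mod_cast r.den_nz
  have h : ((r.num * r.den : ℤ) : ℚ) = r * (r.den : ℚ) ^ 2 := by
    conv_rhs => rw [← Rat.num_div_den r]
    push_cast
    field_simp
    rw [Rat.num_div_den]
  rw [h, padicValRat.mul hr (pow_ne_zero 2 hden), padicValRat.pow]
  rfl

theorem Nat.isSquare_of_even_padicValNat {n : ℕ} (hn : n ≠ 0)
    (h : ∀ p, p.Prime → Even (padicValNat p n)) : IsSquare n := by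
  rw [← Nat.prod_factorization_pow_eq_self hn, Finsupp.prod]
  refine Finset.isSquare_prod _ fun p hp => Even.isSquare_pow ?_ _
  have hp' := Nat.prime_of_mem_primeFactors (Nat.support_factorization n ▸ hp)
  rw [Nat.factorization_def n hp']
  exact h p hp'

theorem Rat.isSquare_of_even_padicValRat {r : ℚ} (hr : 0 < r)
    (h : ∀ p : ℕ, p.Prime → Even (padicValRat p r)) : IsSquare r := by
  have hnum : 0 < r.num := Rat.num_pos.2 hr
  have hden : (r.den : ℚ) ≠ 0 := by exact_mod_cast r.den_nz
  have hsq : IsSquare (r.num.natAbs * r.den) := by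
    refine Nat.isSquare_of_even_padicValNat
      (mul_ne_zero (Int.natAbs_ne_zero.2 hnum.ne') r.den_nz) fun p hp => ?_
    have : Fact p.Prime := ⟨hp⟩
    have h1 := Rat.padicValRat_num_mul_den (p := p) hr.ne'
    have h2 : ((r.num * r.den : ℤ) : ℚ) = ((r.num.natAbs * r.den : ℕ) : ℚ) := by
      push_cast
      rw [Nat.cast_natAbs, abs_of_pos hnum]
    rw [h2, padicValRat.of_nat] at h1
    rw [← Int.even_coe_nat, h1]
    exact (h p hp).add (even_two_mul _)
  obtain ⟨k, hk⟩ := hsq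
  refine ⟨k / r.den, ?_⟩
  have h3 : (r.num : ℚ) * r.den = k * k := by
    have : ((r.num.natAbs * r.den : ℕ) : ℚ) = ((k * k : ℕ) : ℚ) := by rw [hk]
    push_cast at this
    rwa [Nat.cast_natAbs, abs_of_pos hnum] at this
  conv_lhs => rw [← Rat.num_div_den r]
  field_simp
  linarith

/-- The parity of the `p`-adic valuation, as a homomorphism. -/
noncomputable def padicParity (p : ℕ) [Fact p.Prime] : ℚˣ →* Multiplicative (ZMod 2) where
  toFun r := Multiplicative.ofAdd (padicValRat p (r : ℚ) : ZMod 2)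
  map_one' := by simp
  map_mul' r t := by
    rw [Units.val_mul, padicValRat.mul r.ne_zero t.ne_zero, Int.cast_add, ofAdd_add]

theorem padicParity_eq_one_iff {p : ℕ} [Fact p.Prime] {r : ℚˣ} :
    padicParity p r = 1 ↔ Even (padicValRat p (r : ℚ)) := by
  rw [← ZMod.intCast_eq_zero_iff_even]
  exact Multiplicative.ofAdd.injective.eq_iff (b := (0 : ZMod 2))

/-- A subgroup of `ℚˣ` generated, modulo squares, by `-1` and the primes in a finite set `P` has
`2 ^ (#P + 1)` classes modulo squares. -/
theorem Rat.relIndex_sq_of_primes (P : Finset ℕ) (hP : ∀ p ∈ P, p.Prime) (R : Subgroup ℚˣ)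
    (hneg : -1 ∈ R) (hmem : ∀ r : ℚˣ, ∀ p ∈ P, (r : ℚ) = p → r ∈ R)
    (heven : ∀ p : ℕ, p.Prime → p ∉ P → ∀ r ∈ R, Even (padicValRat p (r : ℚ))) :
    (powMonoidHom 2 : ℚˣ →* ℚˣ).range.relIndex R = 2 ^ (P.card + 1) := by
  have (p : P) : Fact (p : ℕ).Prime := ⟨hP p p.2⟩
  let ψ : ℚˣ →* SignTypeˣ × (P → Multiplicative (ZMod 2)) :=
    (Units.map (signHom (α := ℚ)).toMonoidHom).prod (MonoidHom.pi fun p => padicParity p)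
  have hψ1 (r : ℚˣ) : (ψ r).1 = 1 ↔ 0 < (r : ℚ) := by
    rw [Units.ext_iff]
    exact sign_eq_one_iff
  have hψ2 (r : ℚˣ) (p : P) : (ψ r).2 p = padicParity p r := rfl
  have hker : ψ.ker ⊓ R = (powMonoidHom 2 : ℚˣ →* ℚˣ).range ⊓ R := by
    ext r
    refine and_congr_left fun hr => ?_
    constructor
    · intro h
      replace h : ψ r = 1 := h
      obtain ⟨q, hq⟩ := Rat.isSquare_of_even_padicValRat ((hψ1 r).1 (by rw [h]; rfl))
        (fun p hp => by
          by_cases hpP : p ∈ P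
          · have : Fact p.Prime := ⟨hp⟩
            have := hψ2 r ⟨p, hpP⟩
            rw [h] at this
            exact padicParity_eq_one_iff.1 this.symm
          · exact heven p hp hpP r hr)
      have hq0 : q ≠ 0 := by
        rintro rfl
        simp at hq
      exact ⟨Units.mk0 q hq0, Units.ext (by simp [hq, sq])⟩
    · rintro ⟨q, rfl⟩
      change ψ (q ^ 2) = 1
      rw [map_pow]
      have h2 : ∀ x : Multiplicative (ZMod 2), x ^ 2 = 1 := by decide
      have h1 : ∀ x : SignTypeˣ, x ^ 2 = 1 := by decide
      exact Prod.ext (h1 _) (funext fun p => h2 _)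
  have hmap : R.map ψ = ⊤ := by
    rw [eq_top_iff]
    rintro ⟨ε, g⟩ -
    have hε : (ε, 1) ∈ R.map ψ := by
      have : ∀ ε : SignTypeˣ, ε = 1 ∨ ε = -1 := by decide
      rcases this ε with rfl | rfl
      · exact one_mem _
      · refine ⟨-1, hneg, Prod.ext (Units.ext ?_) (funext fun p => ?_)⟩
        · exact sign_neg (a := (-1 : ℚ)) (by norm_num)
        · rw [hψ2]
          refine padicParity_eq_one_iff.2 ?_
          simp
    have hg : g ∈ (R.map ψ).comap (MonoidHom.inr _ _) := by
      refine Subgroup.pi_mem_of_mulSingle_mem g fun p => ?_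
      have : ∀ x : Multiplicative (ZMod 2), x = 1 ∨ x = Multiplicative.ofAdd 1 := by decide
      rcases this (g p) with hp | hp
      · rw [hp, Pi.mulSingle_one]
        exact one_mem _
      · have hp0 : ((p : ℕ) : ℚ) ≠ 0 := by exact_mod_cast (hP p p.2).ne_zero
        refine ⟨Units.mk0 (p : ℕ) hp0, hmem _ p p.2 rfl,
          Prod.ext ((hψ1 _).2 ?_) (funext fun q => ?_)⟩
        · rw [Units.val_mk0]
          exact_mod_cast (hP p p.2).pos
        · rw [hψ2, hp]
          by_cases hqp : q = p
          · subst hqp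
            simp [padicParity]
          · have hne : (q : ℕ) ≠ p := fun h => hqp (Subtype.ext h)
            rw [MonoidHom.inr_apply]
            dsimp only
            rw [Pi.mulSingle_eq_of_ne hqp, padicParity_eq_one_iff,
              Units.val_mk0, padicValRat.of_nat, padicValNat_primes hne]
            simp
    simpa using mul_mem hε hg
  rw [← Subgroup.inf_relIndex_right, ← hker, Subgroup.inf_relIndex_right, Subgroup.relIndex_ker,
    hmap, Subgroup.card_top]
  have hS : Nat.card SignTypeˣ = 2 := by
    rw [Nat.card_eq_fintype_card]; decide
  have hZ : Nat.card (Multiplicative (ZMod 2)) = 2 := by simp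
  rw [Nat.card_prod, hS, Nat.card_fun, hZ, pow_succ, mul_comm]
  simp

theorem MulEquiv.index_range_powMonoidHom {M N : Type*} [CommGroup M] [CommGroup N] (e : M ≃* N)
    (n : ℕ) : (powMonoidHom n : M →* M).range.index = (powMonoidHom n : N →* N).range.index := by
  rw [← e.map_range_powMonoidHom, Subgroup.index_map_equiv]

theorem Int.index_range_powMonoidHom_multiplicative (n : ℕ) :
    (powMonoidHom n : Multiplicative ℤ →* Multiplicative ℤ).range.index = n := by
  have h : (powMonoidHom n : Multiplicative ℤ →* Multiplicative ℤ).range =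
      (AddSubgroup.zmultiples (n : ℤ)).toSubgroup := by
    ext x
    constructor
    · rintro ⟨y, rfl⟩
      exact ⟨y.toAdd, by simp [mul_comm]⟩
    · rintro ⟨k, hk⟩
      refine ⟨Multiplicative.ofAdd k, ?_⟩
      apply Multiplicative.toAdd.injective
      simpa [mul_comm] using hk
  rw [h, AddSubgroup.index_toSubgroup, Int.index_zmultiples, Int.natAbs_natCast]

theorem index_range_powMonoidHom_of_basis {B : Type*} [CommGroup B] {ι : Type*} [Fintype ι]
    (b : Module.Basis ι ℤ (Additive B)) (n : ℕ) :
    (powMonoidHom n : B →* B).range.index = n ^ Fintype.card ι := by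
  let e : B ≃* (ι → Multiplicative ℤ) :=
    { toFun := fun x i => Multiplicative.ofAdd (b.equivFun (Additive.ofMul x) i)
      invFun := fun v => (b.equivFun.symm fun i => (v i).toAdd).toMul
      left_inv := fun x => by simp
      right_inv := fun v => by
        funext i
        simp only [ofMul_toMul, LinearEquiv.apply_symm_apply, ofAdd_toAdd]
      map_mul' := fun x y => by ext; simp }
  have h : (powMonoidHom n : (ι → Multiplicative ℤ) →* (ι → Multiplicative ℤ)).range =
      Subgroup.pi Set.univ
        fun _ => (powMonoidHom n : Multiplicative ℤ →* Multiplicative ℤ).range := by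
    ext v
    simp only [MonoidHom.mem_range, powMonoidHom_apply, Subgroup.mem_pi, Set.mem_univ, true_imp_iff,
      funext_iff, Pi.pow_apply]
    exact (Classical.skolem (p := fun i x => x ^ n = v i)).symm
  rw [e.index_range_powMonoidHom, h, Subgroup.index_pi]
  simp [Int.index_range_powMonoidHom_multiplicative]

namespace NumberField

variable (K : Type*) [Field K] [NumberField K]

theorem Units.index_sq : (powMonoidHom 2 : (𝓞 K)ˣ →* (𝓞 K)ˣ).range.index =
    2 ^ (Units.rank K + 1) := by
  let f := QuotientGroup.mk' (Units.torsion K)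
  have hf : Function.Surjective f := QuotientGroup.mk'_surjective _
  have hB : Function.Injective
      (powMonoidHom (α := (𝓞 K)ˣ ⧸ Units.torsion K) 2) := by
    rw [injective_iff_map_eq_one]
    intro x
    obtain ⟨x, rfl⟩ := hf x
    rw [powMonoidHom_apply, ← map_pow, ← MonoidHom.mem_ker, ← MonoidHom.mem_ker,
      QuotientGroup.ker_mk']
    exact fun h => (isOfFinOrder_pow.1 h).resolve_right two_ne_zero
  have key := relIndex_sq_comap_sq f (1 : _ →* Unit) (fun _ => ⟨1, rfl⟩)
    (by rw [MonoidHom.range_eq_top.2 hf, MonoidHom.ker_one]) hB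
  have hle : (powMonoidHom 2 : (𝓞 K)ˣ →* (𝓞 K)ˣ).range ≤
      (powMonoidHom (α := (𝓞 K)ˣ ⧸ Units.torsion K) 2).range.comap f := by
    rintro _ ⟨x, rfl⟩
    exact ⟨f x, by simp⟩
  have hT : (powMonoidHom 2 : f.ker →* f.ker).range.index = 2 := by
    rw [QuotientGroup.ker_mk', IsCyclic.index_powMonoidHom_range, Nat.gcd_eq_right_iff_dvd]
    exact even_iff_two_dvd.1 (Units.even_torsionOrder K)
  rw [← Subgroup.relIndex_mul_index hle, key, hT, Subgroup.index_comap_of_surjective _ hf,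
    index_range_powMonoidHom_of_basis (Units.basisModTorsion K), Fintype.card_fin, pow_succ]
  simp [mul_comm]

theorem fractionalIdeal_sq_injective :
    Function.Injective (powMonoidHom 2 : (FractionalIdeal (𝓞 K)⁰ K)ˣ →* _) := by
  have key (J : (FractionalIdeal (𝓞 K)⁰ K)ˣ) (hJ : J ^ 2 = 1) :
      (J : FractionalIdeal (𝓞 K)⁰ K) ≤ 1 := by
    intro x hx
    have h2 : x ^ 2 ∈ (1 : FractionalIdeal (𝓞 K)⁰ K) := by
      have h : (J : FractionalIdeal (𝓞 K)⁰ K) * J = 1 := by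
        rw [← Units.val_mul, ← sq, hJ, Units.val_one]
      rw [← h, sq]
      exact FractionalIdeal.mul_mem_mul hx hx
    obtain ⟨y, hy⟩ := (FractionalIdeal.mem_one_iff _).1 h2
    have hInt : IsIntegral ℤ x :=
      IsIntegral.of_pow two_pos (hy ▸ RingOfIntegers.isIntegral_coe y)
    exact (FractionalIdeal.mem_one_iff _).2 ⟨⟨x, hInt⟩, rfl⟩
  rw [injective_iff_map_eq_one]
  intro J hJ
  rw [powMonoidHom_apply] at hJ
  refine Units.ext (le_antisymm (key J hJ) ?_)
  have h := key J⁻¹ (by rw [inv_pow, hJ, inv_one])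
  calc (1 : FractionalIdeal (𝓞 K)⁰ K) = J * (J⁻¹ : (FractionalIdeal (𝓞 K)⁰ K)ˣ) := by simp
    _ ≤ J * 1 := mul_le_mul_right h _
    _ = J := mul_one _

theorem ker_toPrincipalIdeal :
    (toPrincipalIdeal (𝓞 K) K).ker =
      (Units.map (algebraMap (𝓞 K) K).toMonoidHom).range := by
  ext x
  rw [MonoidHom.mem_ker, toPrincipalIdeal_eq_iff, Units.val_one]
  constructor
  · intro h
    have h1 : (x : K) ∈ (1 : FractionalIdeal (𝓞 K)⁰ K) := by
      rw [← h]; exact FractionalIdeal.mem_spanSingleton_self _ _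
    have h2 : ((x⁻¹ : Kˣ) : K) ∈ (1 : FractionalIdeal (𝓞 K)⁰ K) := by
      have : (1 : K) ∈ FractionalIdeal.spanSingleton (𝓞 K)⁰ (x : K) := by
        rw [h]; exact FractionalIdeal.one_mem_one _
      obtain ⟨z, hz⟩ := (FractionalIdeal.mem_spanSingleton _).1 this
      refine (FractionalIdeal.mem_one_iff _).2 ⟨z, ?_⟩
      rw [Algebra.smul_def] at hz
      simpa using eq_inv_of_mul_eq_one_left hz
    obtain ⟨y, hy⟩ := (FractionalIdeal.mem_one_iff _).1 h1
    obtain ⟨z, hz⟩ := (FractionalIdeal.mem_one_iff _).1 h2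
    have hyz : y * z = 1 := by
      apply FaithfulSMul.algebraMap_injective (𝓞 K) K
      rw [map_mul, hy, hz, map_one, Units.mul_inv]
    exact ⟨⟨y, z, hyz, by rw [mul_comm, hyz]⟩, Units.ext hy⟩
  · rintro ⟨u, rfl⟩
    have h := FractionalIdeal.coeIdeal_span_singleton (S := (𝓞 K)⁰) (P := K) (u : 𝓞 K)
    rw [Ideal.span_singleton_eq_top.2 u.isUnit, FractionalIdeal.coeIdeal_top] at h
    exact h.symm

/-- The elements of `Kˣ` which generate the square of a fractional ideal. -/
noncomputable def selmer : Subgroup Kˣ :=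
  (powMonoidHom 2 : (FractionalIdeal (𝓞 K)⁰ K)ˣ →* _).range.comap (toPrincipalIdeal (𝓞 K) K)

theorem relIndex_sq_selmer :
    (powMonoidHom 2 : Kˣ →* Kˣ).range.relIndex (selmer K) =
      2 ^ (Units.rank K + 1) *
        Nat.card (ClassGroup (𝓞 K) ⧸ (powMonoidHom 2 : ClassGroup (𝓞 K) →* _).range) := by
  have hg : (QuotientGroup.mk' (toPrincipalIdeal (𝓞 K) K).range).ker =
    (toPrincipalIdeal (𝓞 K) K).range := QuotientGroup.ker_mk' _
  rw [selmer, relIndex_sq_comap_sq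
    (C := (FractionalIdeal (𝓞 K)⁰ K)ˣ ⧸ (toPrincipalIdeal (𝓞 K) K).range) _ _
    (QuotientGroup.mk'_surjective _) hg
    (fractionalIdeal_sq_injective K), ← Units.index_sq, card_quotient_range_powMonoidHom]
  congr 1
  · have hinj : Function.Injective (Units.map (algebraMap (𝓞 K) K).toMonoidHom) :=
      Units.map_injective (FaithfulSMul.algebraMap_injective (𝓞 K) K)
    rw [((MonoidHom.ofInjective hinj).trans
      (MulEquiv.subgroupCongr (ker_toPrincipalIdeal K).symm)).index_range_powMonoidHom]
  · let e := ClassGroup.equiv (R := 𝓞 K) K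
    have : Finite (ClassGroup (𝓞 K)) := inferInstance
    have : Finite ((FractionalIdeal (𝓞 K)⁰ K)ˣ ⧸ (toPrincipalIdeal (𝓞 K) K).range) :=
      Finite.of_equiv _ e.toEquiv
    rw [← card_quotient_range_powMonoidHom, ← card_quotient_range_powMonoidHom,
      ← Subgroup.index_eq_card, ← Subgroup.index_eq_card, e.symm.index_range_powMonoidHom]


section Selmer

variable {K : Type*} [Field K] [NumberField K]

theorem sq_mem_selmer (x : Kˣ) : x ^ 2 ∈ selmer K :=
  ⟨toPrincipalIdeal (𝓞 K) K x, by simp⟩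

theorem mem_selmer_of_span_eq {x : Kˣ} {y : 𝓞 K} (hxy : (x : K) = algebraMap (𝓞 K) K y)
    {I : Ideal (𝓞 K)} (hI : I * I = Ideal.span {y}) : x ∈ selmer K := by
  have hI' : (I : FractionalIdeal (𝓞 K)⁰ K) * (I : FractionalIdeal (𝓞 K)⁰ K) =
      FractionalIdeal.spanSingleton _ (x : K) := by
    rw [← FractionalIdeal.coeIdeal_mul, hI, FractionalIdeal.coeIdeal_span_singleton, hxy]
  have hI0 : (I : FractionalIdeal (𝓞 K)⁰ K) ≠ 0 := by
    intro h
    rw [h, mul_zero] at hI'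
    exact FractionalIdeal.spanSingleton_ne_zero_iff.2 x.ne_zero hI'.symm
  refine ⟨Units.mk0 _ hI0, Units.ext ?_⟩
  rw [powMonoidHom_apply, Units.val_pow_eq_pow_val, Units.val_mk0, sq, hI', coe_toPrincipalIdeal]

/-- If `y ^ 2 = x * z` and `x`, `y`, `z` generate the unit ideal, then `(x) = (x, y) ^ 2`. -/
theorem mem_selmer_of_sq_eq_mul {u : Kˣ} {x y z α β γ : 𝓞 K} (hu : (u : K) = algebraMap (𝓞 K) K x)
    (h : y ^ 2 = x * z) (h1 : α * x + β * y + γ * z = 1) : u ∈ selmer K := by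
  refine mem_selmer_of_span_eq hu (I := Ideal.span {x, y}) (le_antisymm ?_ ?_)
  · rw [Ideal.span_mul_span', Ideal.span_le]
    rintro _ ⟨a, ha, b, hb, rfl⟩
    simp only [Set.mem_insert_iff, Set.mem_singleton_iff] at ha hb
    rw [SetLike.mem_coe, Ideal.mem_span_singleton]
    rcases ha with rfl | rfl <;> rcases hb with rfl | rfl
    · exact dvd_mul_right _ _
    · exact dvd_mul_right _ _
    · exact dvd_mul_left _ _
    · exact ⟨z, by rw [← h, sq]⟩
  · rw [Ideal.span_singleton_le_iff_mem]
    have hx : x ∈ Ideal.span {x, y} := Ideal.subset_span (by simp)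
    have hy : y ∈ Ideal.span {x, y} := Ideal.subset_span (by simp)
    have : α * (x * x) + β * (x * y) + γ * (y * y) = x := by
      linear_combination x * h1 + γ * h
    refine Set.mem_of_eq_of_mem this.symm ?_
    exact add_mem (add_mem (Ideal.mul_mem_left _ _ (Ideal.mul_mem_mul hx hx))
      (Ideal.mul_mem_left _ _ (Ideal.mul_mem_mul hx hy)))
      (Ideal.mul_mem_left _ _ (Ideal.mul_mem_mul hy hy))

theorem exists_span_eq_of_mem_selmer {x : Kˣ} (hx : x ∈ selmer K) {y : 𝓞 K}
    (hxy : (x : K) = algebraMap (𝓞 K) K y) : ∃ I : Ideal (𝓞 K), I * I = Ideal.span {y} := by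
  obtain ⟨J, hJ⟩ := hx
  have hJ' : (J : FractionalIdeal (𝓞 K)⁰ K) * J = (Ideal.span {y} : Ideal (𝓞 K)) := by
    rw [FractionalIdeal.coeIdeal_span_singleton, ← hxy, ← coe_toPrincipalIdeal, ← hJ,
      powMonoidHom_apply, Units.val_pow_eq_pow_val, sq]
  have hle : (J : FractionalIdeal (𝓞 K)⁰ K) ≤ 1 := by
    intro z hz
    have hz2 : z ^ 2 ∈ (1 : FractionalIdeal (𝓞 K)⁰ K) := by
      refine FractionalIdeal.coeIdeal_le_one (I := Ideal.span {y}) ?_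
      rw [← hJ', sq]
      exact FractionalIdeal.mul_mem_mul hz hz
    obtain ⟨w, hw⟩ := (FractionalIdeal.mem_one_iff _).1 hz2
    have hInt : IsIntegral ℤ z :=
      IsIntegral.of_pow two_pos (hw ▸ RingOfIntegers.isIntegral_coe w)
    exact (FractionalIdeal.mem_one_iff _).2 ⟨⟨z, hInt⟩, rfl⟩
  obtain ⟨I, hI⟩ := FractionalIdeal.le_one_iff_exists_coeIdeal.1 hle
  refine ⟨I, ?_⟩
  rw [← hI, ← FractionalIdeal.coeIdeal_mul] at hJ'
  exact FractionalIdeal.coeIdeal_injective hJ'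

theorem exists_abs_norm_eq_sq_of_mem_selmer {x : Kˣ} (hx : x ∈ selmer K) :
    ∃ q : ℚ, |Algebra.norm ℚ (x : K)| = q ^ 2 := by
  obtain ⟨J, hJ⟩ := hx
  refine ⟨FractionalIdeal.absNorm (J : FractionalIdeal (𝓞 K)⁰ K), ?_⟩
  rw [← FractionalIdeal.absNorm_span_singleton (𝓞 K), ← coe_toPrincipalIdeal, ← hJ,
    powMonoidHom_apply, Units.val_pow_eq_pow_val, map_pow]

theorem neg_one_mem_selmer : (-1 : Kˣ) ∈ selmer K :=
  mem_selmer_of_sq_eq_mul (x := -1) (y := 0) (z := 0) (α := -1) (β := 0) (γ := 0)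
    (by simp) (by simp) (by simp)

end Selmer

section Quadratic

variable {K : Type*} [Field K]

/-- The discriminant of `ℚ(√d)`. -/
def quadraticDiscr (d : ℤ) : ℤ := if d % 4 = 1 then d else 4 * d

/-- `s` is a square root of the integer `d`, which is not a rational square, and `1`, `s` span `K`
over `ℚ`. -/
structure IsQuadraticGenerator (d : ℤ) (s : 𝓞 K) : Prop where
  sq_eq : s ^ 2 = d
  not_isSquare : ¬ IsSquare (d : ℚ)
  exists_eq : ∀ x : K, ∃ a b : ℚ, x = a + b * s

namespace IsQuadraticGenerator

variable {d : ℤ} {s : 𝓞 K}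

theorem coe_sq (h : IsQuadraticGenerator d s) : (s : K) ^ 2 = d := by
  have := congrArg (algebraMap (𝓞 K) K) h.sq_eq
  simpa using this

theorem embedding_sq (h : IsQuadraticGenerator d s) (φ : K →+* ℂ) : φ s ^ 2 = d := by
  rw [← map_pow, h.coe_sq, map_intCast]

variable [NumberField K]

theorem eq_zero (h : IsQuadraticGenerator d s) {a b : ℚ} (hab : (a + b * s : K) = 0) :
    a = 0 ∧ b = 0 := by
  have hb : b = 0 := by
    by_contra hb
    refine h.not_isSquare ⟨a / b, ?_⟩
    have hbK : (b : K) ≠ 0 := by exact_mod_cast hb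
    have hK : ((d : ℚ) : K) = ((a / b * (a / b) : ℚ) : K) := by
      have hs : (s : K) = -(a / b) := by
        field_simp
        linear_combination hab
      have := h.coe_sq
      rw [hs] at this
      push_cast
      rw [← this]
      ring
    exact_mod_cast hK
  subst hb
  simpa using hab

/-- The basis `1, s` of `K`. -/
noncomputable def basis (h : IsQuadraticGenerator d s) : Module.Basis (Fin 2) ℚ K :=
  Module.Basis.mk (v := ![1, (s : K)])
    (by
      rw [LinearIndependent.pair_iff]
      intro a b hab
      exact h.eq_zero (by simpa [Algebra.smul_def] using hab))
    (by
      intro x _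
      obtain ⟨a, b, rfl⟩ := h.exists_eq x
      rw [Matrix.range_cons, Matrix.range_cons, Matrix.range_empty, Set.union_empty,
        Set.singleton_union]
      exact Submodule.mem_span_pair.2 ⟨a, b, by simp [Algebra.smul_def]⟩)

theorem basis_zero (h : IsQuadraticGenerator d s) : h.basis 0 = 1 := by simp [basis]

theorem basis_one (h : IsQuadraticGenerator d s) : h.basis 1 = s := by simp [basis]

theorem finrank_eq_two (h : IsQuadraticGenerator d s) : Module.finrank ℚ K = 2 := by
  rw [Module.finrank_eq_card_basis h.basis, Fintype.card_fin]

theorem repr_eq (h : IsQuadraticGenerator d s) (a b : ℚ) :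
    h.basis.equivFun (a + b * s : K) = ![a, b] := by
  have : (a + b * s : K) = h.basis.equivFun.symm ![a, b] := by
    rw [Module.Basis.equivFun_symm_apply, Fin.sum_univ_two, basis_zero, basis_one]
    simp [Algebra.smul_def]
  rw [this, LinearEquiv.apply_symm_apply]

theorem norm_eq (h : IsQuadraticGenerator d s) (a b : ℚ) :
    Algebra.norm ℚ (a + b * s : K) = a ^ 2 - d * b ^ 2 := by
  rw [Algebra.norm_eq_matrix_det h.basis, Matrix.det_fin_two]
  have hrepr (x : K) (i : Fin 2) : h.basis.repr x i = h.basis.equivFun x i := rfl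
  have e0 : h.basis.equivFun ((a + b * s : K) * 1) = ![a, b] := by rw [mul_one, h.repr_eq]
  have e1 : h.basis.equivFun ((a + b * s : K) * s) = ![d * b, a] := by
    rw [← h.repr_eq]
    congr 1
    push_cast
    linear_combination (b : K) * h.coe_sq
  simp only [Algebra.leftMulMatrix_eq_repr_mul, hrepr, basis_zero, basis_one, e0, e1]
  simp
  ring

/-- The automorphism of `K` sending `s` to `-s`. -/
noncomputable def conj (h : IsQuadraticGenerator d s) : K →ₐ[ℚ] K :=
  AlgHom.ofLinearMap (h.basis.constr ℚ ![1, -(s : K)])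
    (by
      have := h.basis.constr_basis ℚ ![1, -(s : K)] 0
      rwa [basis_zero] at this)
    (by
      have key (a b : ℚ) : h.basis.constr ℚ ![1, -(s : K)] (a + b * s : K) = a - b * s := by
        rw [Module.Basis.constr_apply_fintype, h.repr_eq, Fin.sum_univ_two]
        simp [Algebra.smul_def, sub_eq_add_neg]
      intro x y
      obtain ⟨a, b, rfl⟩ := h.exists_eq x
      obtain ⟨a', b', rfl⟩ := h.exists_eq y
      have : (a + b * s : K) * (a' + b' * s) =
          ((a * a' + d * b * b' : ℚ) : K) + ((a * b' + b * a' : ℚ) : K) * s := by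
        push_cast
        linear_combination (b * b' : K) * h.coe_sq
      rw [this, key, key, key]
      push_cast
      linear_combination (-b * b' : K) * h.coe_sq)

theorem conj_s (h : IsQuadraticGenerator d s) : h.conj s = -s := by
  have := h.basis.constr_basis ℚ ![1, -(s : K)] 1
  rwa [basis_one] at this

theorem sq_eq_span_of_mem_sq {p : ℕ} (hp : p.Prime) (h : IsQuadraticGenerator d s)
    {P : Ideal (𝓞 K)} [hP : P.IsPrime] (hpP : (p : 𝓞 K) ∈ P ^ 2) :
    P ^ 2 = Ideal.span {(p : 𝓞 K)} ∧ ∀ x : 𝓞 K, ∃ n : ℤ, x - n ∈ P := by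
  have hle : Ideal.span {(p : 𝓞 K)} ≤ P ^ 2 := (Ideal.span_singleton_le_iff_mem _).2 hpP
  have hpn : Ideal.absNorm (Ideal.span {(p : 𝓞 K)}) = p ^ 2 := by
    rw [Ideal.absNorm_span_natCast, RingOfIntegers.rank, h.finrank_eq_two]
  have hdvd : Ideal.absNorm P ^ 2 ∣ p ^ 2 := by
    rw [← map_pow, ← hpn]
    exact Ideal.absNorm_dvd_absNorm_of_le hle
  have hnorm : Ideal.absNorm P = p := by
    rcases (Nat.dvd_prime hp).1 ((Nat.pow_dvd_pow_iff two_ne_zero).1 hdvd) with h1 | h1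
    · exact absurd (Ideal.absNorm_eq_one_iff.1 h1) hP.ne_top
    · exact h1
  refine ⟨?_, fun x => ?_⟩
  · obtain ⟨J, hJ⟩ := Ideal.dvd_iff_le.2 hle
    have hJ1 : Ideal.absNorm J = 1 := by
      have := congrArg Ideal.absNorm hJ
      rw [map_mul, map_pow, hnorm, hpn] at this
      have hp2 : 0 < p ^ 2 := pow_pos hp.pos 2
      exact Nat.eq_of_mul_eq_mul_left hp2 (by rw [mul_one, ← this])
    rw [hJ, Ideal.absNorm_eq_one_iff.1 hJ1, Ideal.mul_top]
  · have : Fact p.Prime := ⟨hp⟩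
    have hcard : Nat.card (𝓞 K ⧸ P) = p := hnorm
    have : Finite (𝓞 K ⧸ P) := Nat.finite_of_card_ne_zero (by rw [hcard]; exact hp.ne_zero)
    have : Fintype (𝓞 K ⧸ P) := Fintype.ofFinite _
    have : CharP (𝓞 K ⧸ P) p := by
      refine (CharP.charP_iff_prime_eq_zero hp).2 ?_
      rw [← map_natCast (Ideal.Quotient.mk P), Ideal.Quotient.eq_zero_iff_mem]
      exact Ideal.pow_le_self two_ne_zero hpP
    obtain ⟨c, hc⟩ := (ZMod.castHom_bijective (𝓞 K ⧸ P)
      (by rw [← Nat.card_eq_fintype_card, hcard])).2 (Ideal.Quotient.mk P x)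
    obtain ⟨n, rfl⟩ := ZMod.intCast_surjective c
    refine ⟨n, ?_⟩
    rw [map_intCast] at hc
    rw [← Ideal.Quotient.eq, map_intCast, hc]

/-- The half-integer generator of the ring of integers when `d ≡ 1 (mod 4)`. -/
theorem exists_two_mul_eq (h : IsQuadraticGenerator d s) (hd : d % 4 = 1) :
    ∃ ω : 𝓞 K, 2 * ω = 1 + s := by
  obtain ⟨k, hk⟩ : ∃ k, d = 4 * k + 1 := ⟨d / 4, by omega⟩
  have hInt : IsIntegral ℤ ((1 + s : K) / 2) := by
    refine ⟨Polynomial.X ^ 2 - Polynomial.X - Polynomial.C k, by monicity!, ?_⟩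
    have hs := h.coe_sq
    rw [hk] at hs
    push_cast at hs
    simp only [Polynomial.eval₂_sub, Polynomial.eval₂_pow, Polynomial.eval₂_X, Polynomial.eval₂_C]
    simp only [algebraMap_int_eq, eq_intCast]
    linear_combination hs / 4
  refine ⟨⟨_, hInt⟩, RingOfIntegers.ext ?_⟩
  change 2 * ((1 + s : K) / 2) = 1 + s
  ring

theorem intCast_mem_iff_dvd {p : ℕ} (hp : p.Prime) {P : Ideal (𝓞 K)} (hP : P ≠ ⊤)
    (hpP : (p : 𝓞 K) ∈ P) {n : ℤ} : (n : 𝓞 K) ∈ P ↔ (p : ℤ) ∣ n := by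
  constructor
  · intro hn
    by_contra hpn
    obtain ⟨a, b, hab⟩ := (Int.prime_iff_natAbs_prime.2 (by simpa using hp) :
      Prime (p : ℤ)).coprime_iff_not_dvd.2 hpn
    refine hP ((Ideal.eq_top_iff_one _).2 ?_)
    have : (a : 𝓞 K) * p + b * n = 1 := by exact_mod_cast congrArg (Int.cast : ℤ → 𝓞 K) hab
    rw [← this]
    exact add_mem (Ideal.mul_mem_left _ _ hpP) (Ideal.mul_mem_left _ _ hn)
  · rintro ⟨k, rfl⟩
    push_cast
    exact Ideal.mul_mem_right _ _ hpP

/-- A prime whose ideal is divisible by the square of a prime ideal divides the discriminant. -/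
theorem dvd_discr_of_mem_sq {p : ℕ} (hp : p.Prime) (h : IsQuadraticGenerator d s)
    {P : Ideal (𝓞 K)} [hP : P.IsPrime] (hpP : (p : 𝓞 K) ∈ P ^ 2) :
    (p : ℤ) ∣ quadraticDiscr d := by
  obtain ⟨hP2, hres⟩ := h.sq_eq_span_of_mem_sq hp hpP
  have hpP1 : (p : 𝓞 K) ∈ P := Ideal.pow_le_self two_ne_zero hpP
  let σ : 𝓞 K →+* 𝓞 K := RingOfIntegers.mapRingHom h.conj.toRingHom
  have hσs : σ s = -s := RingOfIntegers.ext h.conj_s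
  have hσ (x : 𝓞 K) : x - σ x ∈ P := by
    obtain ⟨n, hn⟩ := hres x
    have h1 : (x - n) ^ 2 ∈ Ideal.span {(p : 𝓞 K)} := hP2 ▸ Ideal.pow_mem_pow hn 2
    obtain ⟨y, hy⟩ := Ideal.mem_span_singleton.1 h1
    have h2 : σ x - n ∈ P := by
      refine hP.mem_of_pow_mem 2 ?_
      have h3 := congrArg σ hy
      simp only [map_pow, map_sub, map_intCast, map_mul, map_natCast] at h3
      rw [h3]
      exact Ideal.mul_mem_right _ _ hpP1
    have := sub_mem hn h2
    rwa [sub_sub_sub_cancel_right] at this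
  rw [← intCast_mem_iff_dvd hp hP.ne_top hpP1, quadraticDiscr]
  split_ifs with hd
  · obtain ⟨ω, hω⟩ := h.exists_two_mul_eq hd
    have hσω : ω - σ ω = s := by
      have h2 := congrArg σ hω
      simp only [map_mul, map_add, map_one, map_ofNat, hσs] at h2
      have : (2 : 𝓞 K) ≠ 0 := two_ne_zero
      apply mul_left_cancel₀ this
      linear_combination hω - h2
    rw [← h.sq_eq, sq]
    exact Ideal.mul_mem_left _ _ (hσω ▸ hσ ω)
  · have h1 := hσ s
    rw [hσs] at h1
    have h2 : ((4 * d : ℤ) : 𝓞 K) = (s - -s) * (s - -s) := by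
      push_cast
      rw [← h.sq_eq]
      ring
    rw [h2]
    exact Ideal.mul_mem_left _ _ h1

/-- Elements of `ℚˣ` which generate the square of an ideal of `K` have even valuation at the
unramified primes. -/
theorem even_padicValRat {p : ℕ} (hp : p.Prime) (h : IsQuadraticGenerator d s)
    (hpd : ¬ (p : ℤ) ∣ quadraticDiscr d) {r : ℚˣ}
    (hr : Units.map (algebraMap ℚ K).toMonoidHom r ∈ selmer K) :
    Even (padicValRat p (r : ℚ)) := by
  have : Fact p.Prime := ⟨hp⟩
  have hp0 : (p : ℚ) ≠ 0 := by exact_mod_cast hp.ne_zero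
  by_contra hodd
  rw [Int.not_even_iff_odd] at hodd
  set N : ℤ := (r : ℚ).num * (r : ℚ).den with hN
  have hden : ((r : ℚ).den : ℚ) ≠ 0 := by exact_mod_cast (r : ℚ).den_nz
  have hN0 : N ≠ 0 :=
    mul_ne_zero (Rat.num_ne_zero.2 r.ne_zero) (by exact_mod_cast (r : ℚ).den_nz)
  have hval := Rat.padicValRat_num_mul_den (p := p) r.ne_zero
  rw [← hN, padicValRat.of_int] at hval
  have hoddN : Odd (padicValInt p N) := by
    rw [← Int.odd_coe_nat, hval]
    exact hodd.add_even (even_two_mul _)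
  obtain ⟨j, hj⟩ := hoddN
  obtain ⟨t, ht⟩ : (p : ℤ) ^ padicValInt p N ∣ N := padicValInt_dvd N
  have hpt : ¬ (p : ℤ) ∣ t := by
    rintro ⟨k, rfl⟩
    have : (p : ℤ) ^ (padicValInt p N + 1) ∣ N := ⟨k, by rw [pow_succ]; linear_combination ht⟩
    rcases (padicValInt_dvd_iff _ _).1 this with h0 | h0
    · exact hN0 h0
    · omega
  have hrN : (r : ℚ) * ((r : ℚ).den) ^ 2 = N := by
    rw [hN]
    conv_lhs => rw [← Rat.num_div_den (r : ℚ)]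
    push_cast
    field_simp
    rw [Rat.num_div_den]
  have hrt : (r : ℚ) * ((r : ℚ).den / p ^ j) ^ 2 = p * t := by
    have hNq : (N : ℚ) = p ^ (2 * j + 1) * t := by
      rw [← hj]
      exact_mod_cast congrArg (Int.cast : ℤ → ℚ) ht
    rw [hNq] at hrN
    field_simp
    rw [hrN]
    ring
  let w : ℚˣ := Units.mk0 ((r : ℚ).den / p ^ j) (div_ne_zero hden (pow_ne_zero _ hp0))
  have hmem : Units.map (algebraMap ℚ K).toMonoidHom (r * w ^ 2) ∈ selmer K := by
    rw [map_mul, map_pow]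
    exact mul_mem hr (sq_mem_selmer _)
  obtain ⟨I, hI⟩ := exists_span_eq_of_mem_selmer hmem (y := (p * t : 𝓞 K)) (by
    have := congrArg (algebraMap ℚ K) hrt
    simpa [w] using this)
  have hne : Ideal.span {(p : 𝓞 K)} ≠ ⊤ := by
    rw [Ne, Ideal.span_singleton_eq_top]
    intro hu
    have h1 := Ideal.absNorm_span_natCast (S := 𝓞 K) p
    rw [Ideal.span_singleton_eq_top.2 hu, Ideal.absNorm_top, RingOfIntegers.rank,
      h.finrank_eq_two] at h1
    exact hp.ne_one ((Nat.pow_eq_one.1 h1.symm).resolve_right two_ne_zero)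
  obtain ⟨P, hP, hle⟩ := Ideal.exists_le_maximal _ hne
  have hpP : (p : 𝓞 K) ∈ P := hle (Ideal.mem_span_singleton_self _)
  have hPprime : P.IsPrime := hP.isPrime
  have hIP : I ≤ P := by
    have : I * I ≤ P := by
      rw [hI, Ideal.span_singleton_le_iff_mem]
      exact Ideal.mul_mem_right _ _ hpP
    exact (hPprime.mul_le.1 this).elim id id
  have hptP : (p * t : 𝓞 K) ∈ P ^ 2 := by
    rw [sq]
    exact Ideal.mul_mono hIP hIP (hI ▸ Ideal.mem_span_singleton_self _)
  refine hpd (h.dvd_discr_of_mem_sq hp (P := P) ?_)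
  obtain ⟨a, b, hab⟩ := (Int.prime_iff_natAbs_prime.2 (by simpa using hp) :
    Prime (p : ℤ)).coprime_iff_not_dvd.2 hpt
  have hab' : (a : 𝓞 K) * p + b * t = 1 := by exact_mod_cast congrArg (Int.cast : ℤ → 𝓞 K) hab
  have : (p : 𝓞 K) = a * p ^ 2 + b * (p * t) := by linear_combination (-p : 𝓞 K) * hab'
  rw [this]
  exact add_mem (Ideal.mul_mem_left _ _ (Ideal.pow_mem_pow hpP 2)) (Ideal.mul_mem_left _ _ hptP)

theorem mem_selmer_of_dvd_discr (h : IsQuadraticGenerator d s) (hsf : Squarefree d) {p : ℕ}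
    (hp : p.Prime) (hpd : (p : ℤ) ∣ quadraticDiscr d) {u : Kˣ} (hu : (u : K) = p) :
    u ∈ selmer K := by
  have hpZ : Prime (p : ℤ) := Nat.prime_iff_prime_int.1 hp
  by_cases hdvd : (p : ℤ) ∣ d
  · obtain ⟨k, rfl⟩ := hdvd
    have hcop : IsCoprime (p : ℤ) k := by
      refine hpZ.coprime_iff_not_dvd.2 fun ⟨j, hj⟩ => hpZ.not_isUnit (hsf p ⟨j, ?_⟩)
      rw [hj, mul_assoc]
    obtain ⟨a, b, hab⟩ := hcop
    refine mem_selmer_of_sq_eq_mul (x := p) (y := s) (z := k) (α := a) (β := 0) (γ := b)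
      (by simpa using hu) (by simpa using h.sq_eq) ?_
    have := congrArg (Int.cast : ℤ → 𝓞 K) hab
    push_cast at this
    linear_combination this
  · have hd4 : d % 4 ≠ 1 := by
      intro hd
      rw [quadraticDiscr, if_pos hd] at hpd
      exact hdvd hpd
    rw [quadraticDiscr, if_neg hd4] at hpd
    have hp2 : p = 2 := by
      have h4 : (p : ℤ) ∣ 2 ^ 2 := by simpa using (hpZ.dvd_or_dvd hpd).resolve_right hdvd
      have : p ∣ 2 := by exact_mod_cast hpZ.dvd_of_dvd_pow h4
      exact (Nat.prime_dvd_prime_iff_eq hp Nat.prime_two).1 this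
    subst hp2
    obtain ⟨k, rfl⟩ : ∃ k, d = 4 * k + 3 := ⟨d / 4, by omega⟩
    have hs := h.sq_eq
    push_cast at hs
    refine mem_selmer_of_sq_eq_mul (x := (2 : ℕ)) (y := 1 + s) (z := (2 * k + 2 : ℤ) + s)
      (α := -k) (β := -1) (γ := 1) (by rw [hu, map_natCast]) ?_ ?_
    · push_cast
      linear_combination hs
    · push_cast
      ring

/-- The inclusion `ℚˣ → Kˣ`. -/
noncomputable abbrev ratUnits (K : Type*) [Field K] [CharZero K] : ℚˣ →* Kˣ :=
  Units.map (algebraMap ℚ K).toMonoidHom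

theorem coe_ratUnits (r : ℚˣ) : (ratUnits K r : K) = ((r : ℚ) : K) := by
  simp [ratUnits]

theorem relIndex_sq_comap_selmer (h : IsQuadraticGenerator d s) (hsf : Squarefree d) :
    (powMonoidHom 2 : ℚˣ →* ℚˣ).range.relIndex ((selmer K).comap (ratUnits K)) =
      2 ^ ((quadraticDiscr d).natAbs.primeFactors.card + 1) := by
  have hδ : quadraticDiscr d ≠ 0 := by
    rw [quadraticDiscr]
    split_ifs <;> simp [hsf.ne_zero]
  refine Rat.relIndex_sq_of_primes _ (fun p hp => Nat.prime_of_mem_primeFactors hp) _ ?_ ?_ ?_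
  · have : ratUnits K (-1) = -1 := Units.ext (by simp)
    rw [Subgroup.mem_comap, this]
    exact neg_one_mem_selmer
  · intro r p hp hr
    refine h.mem_selmer_of_dvd_discr hsf (Nat.prime_of_mem_primeFactors hp)
      (Int.natCast_dvd.2 (Nat.dvd_of_mem_primeFactors hp)) ?_
    rw [coe_ratUnits, hr, Rat.cast_natCast]
  · intro p hp hpn r hr
    refine h.even_padicValRat hp (fun hdvd => hpn ?_) hr
    exact Nat.mem_primeFactors.2 ⟨hp, Int.natCast_dvd.1 hdvd, Int.natAbs_ne_zero.2 hδ⟩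

theorem coe_eq_sq_iff (h : IsQuadraticGenerator d s) (r : ℚ) :
    (∃ x : K, x ^ 2 = r) ↔ ∃ q : ℚ, r = q ^ 2 ∨ r = d * q ^ 2 := by
  constructor
  · rintro ⟨x, hx⟩
    obtain ⟨a, b, rfl⟩ := h.exists_eq x
    have h0 : ((a ^ 2 + d * b ^ 2 - r : ℚ) : K) + ((2 * a * b : ℚ) : K) * s = 0 := by
      push_cast
      linear_combination hx - (b : K) ^ 2 * h.coe_sq
    obtain ⟨h1, h2⟩ := h.eq_zero h0
    rcases mul_eq_zero.1 h2 with h3 | h3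
    · have ha : a = 0 := by simpa using h3
      exact ⟨b, Or.inr (by subst ha; linear_combination -h1)⟩
    · exact ⟨a, Or.inl (by subst h3; linear_combination -h1)⟩
  · rintro ⟨q, rfl | rfl⟩
    · exact ⟨q, by push_cast; rfl⟩
    · exact ⟨q * s, by push_cast; linear_combination (q : K) ^ 2 * h.coe_sq⟩

theorem relIndex_sq_comap_sq (h : IsQuadraticGenerator d s) :
    (powMonoidHom 2 : ℚˣ →* ℚˣ).range.relIndex
      ((powMonoidHom 2 : Kˣ →* Kˣ).range.comap (ratUnits K)) = 2 := by
  have hd0 : (d : ℚ) ≠ 0 := fun h0 => h.not_isSquare (h0 ▸ IsSquare.zero)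
  have hsq (r : ℚˣ) : r ∈ (powMonoidHom 2 : ℚˣ →* ℚˣ).range ↔ ∃ q : ℚ, (r : ℚ) = q ^ 2 := by
    constructor
    · rintro ⟨q, rfl⟩
      exact ⟨q, by simp⟩
    · rintro ⟨q, hq⟩
      have hq0 : q ≠ 0 := by
        rintro rfl
        simp at hq
      exact ⟨Units.mk0 q hq0, Units.ext (by simp [hq])⟩
  have hmem (r : ℚˣ) : r ∈ (powMonoidHom 2 : Kˣ →* Kˣ).range.comap (ratUnits K) ↔
      ∃ q : ℚ, (r : ℚ) = q ^ 2 ∨ (r : ℚ) = d * q ^ 2 := by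
    rw [← h.coe_eq_sq_iff]
    constructor
    · rintro ⟨x, hx⟩
      exact ⟨x, by rw [← coe_ratUnits, ← hx]; simp⟩
    · rintro ⟨x, hx⟩
      have hx0 : x ≠ 0 := by
        rintro rfl
        exact r.ne_zero (by simpa using hx.symm)
      exact ⟨Units.mk0 x hx0, Units.ext (by rw [coe_ratUnits, ← hx]; simp)⟩
  refine Subgroup.relIndex_eq_two_iff.2 ⟨Units.mk0 d hd0, (hmem _).2 ⟨1, by simp⟩, fun b hb => ?_⟩
  rw [hsq, hsq, Units.val_mul, Units.val_mk0]
  obtain ⟨q, hq⟩ := (hmem b).1 hb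
  have hexcl : ¬ ((∃ q : ℚ, (b : ℚ) * d = q ^ 2) ∧ ∃ q : ℚ, (b : ℚ) = q ^ 2) := by
    rintro ⟨⟨x, hx⟩, y, hy⟩
    have hy0 : y ≠ 0 := by
      rintro rfl
      simp at hy
    refine h.not_isSquare ⟨x / y, ?_⟩
    field_simp
    rw [← hx, hy]
    ring
  rcases hq with hq | hq
  · exact Or.inr ⟨⟨q, hq⟩, fun hbd => hexcl ⟨hbd, q, hq⟩⟩
  · have hbd : ∃ q : ℚ, (b : ℚ) * d = q ^ 2 := ⟨d * q, by rw [hq]; ring⟩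
    exact Or.inl ⟨hbd, fun hbsq => hexcl ⟨hbd, hbsq⟩⟩

/-- The subgroup of `Kˣ` generated by the squares and the rational elements of `selmer K`. -/
noncomputable def ratSelmer (K : Type*) [Field K] [NumberField K] : Subgroup Kˣ :=
  ((selmer K).comap (ratUnits K)).map (ratUnits K) ⊔ (powMonoidHom 2 : Kˣ →* Kˣ).range

theorem sq_le_selmer : (powMonoidHom 2 : Kˣ →* Kˣ).range ≤ selmer K := by
  rintro _ ⟨x, rfl⟩
  exact sq_mem_selmer x

theorem sq_le_ratSelmer : (powMonoidHom 2 : Kˣ →* Kˣ).range ≤ ratSelmer K := le_sup_right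

theorem ratSelmer_le : ratSelmer K ≤ selmer K :=
  sup_le (Subgroup.map_comap_le _ _) sq_le_selmer

theorem relIndex_sq_ratSelmer (h : IsQuadraticGenerator d s) (hsf : Squarefree d) :
    (powMonoidHom 2 : Kˣ →* Kˣ).range.relIndex (ratSelmer K) =
      2 ^ (quadraticDiscr d).natAbs.primeFactors.card := by
  rw [ratSelmer, Subgroup.relIndex_sup_right, ← Subgroup.relIndex_comap]
  have := Subgroup.relIndex_mul_relIndex (powMonoidHom 2 : ℚˣ →* ℚˣ).range
    ((powMonoidHom 2 : Kˣ →* Kˣ).range.comap (ratUnits K)) ((selmer K).comap (ratUnits K))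
    (by
      rintro _ ⟨q, rfl⟩
      exact ⟨ratUnits K q, by simp [powMonoidHom_apply, map_pow]⟩)
    (Subgroup.comap_mono sq_le_selmer)
  rw [h.relIndex_sq_comap_sq, h.relIndex_sq_comap_selmer hsf, pow_succ'] at this
  exact Nat.eq_of_mul_eq_mul_left two_pos this

theorem norm_pos_of_mem_ratSelmer (h : IsQuadraticGenerator d s) {x : Kˣ}
    (hx : x ∈ ratSelmer K) : 0 < Algebra.norm ℚ (x : K) := by
  obtain ⟨_, ⟨r, _, rfl⟩, _, ⟨y, rfl⟩, rfl⟩ := Subgroup.mem_sup.1 hx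
  have hr : Algebra.norm ℚ (ratUnits K r : K) = (r : ℚ) ^ 2 := by
    rw [coe_ratUnits, ← h.finrank_eq_two, ← Algebra.norm_algebraMap]
    simp
  rw [Units.val_mul, map_mul, hr, powMonoidHom_apply, Units.val_pow_eq_pow_val, map_pow]
  exact mul_pos (sq_pos_of_ne_zero r.ne_zero)
    (sq_pos_of_ne_zero (Algebra.norm_ne_zero_iff.2 y.ne_zero))

theorem mem_ratSelmer (h : IsQuadraticGenerator d s) {x : Kˣ} (hx : x ∈ selmer K)
    (hpos : 0 < Algebra.norm ℚ (x : K)) : x ∈ ratSelmer K := by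
  obtain ⟨q, hq⟩ := exists_abs_norm_eq_sq_of_mem_selmer hx
  rw [abs_of_pos hpos] at hq
  have hq0 : q ≠ 0 := by
    rintro rfl
    simp at hq
  have hqK : (q : K) ≠ 0 := by exact_mod_cast hq0
  suffices ∃ r : ℚ, r ≠ 0 ∧ ∃ z : K, z ≠ 0 ∧ (x : K) = r * z ^ 2 by
    obtain ⟨r, hr, z, hz, hxrz⟩ := this
    have hx' : x = ratUnits K (Units.mk0 r hr) * Units.mk0 z hz ^ 2 :=
      Units.ext (by rw [hxrz, Units.val_mul, coe_ratUnits]; simp)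
    rw [hx'] at hx ⊢
    refine Subgroup.mul_mem_sup (Subgroup.mem_map_of_mem _ ?_) ⟨_, rfl⟩
    exact (Subgroup.mul_mem_cancel_right _ (sq_mem_selmer _)).1 hx
  obtain ⟨a, b, hab⟩ := h.exists_eq (x : K)
  rw [hab, h.norm_eq] at hq
  have hqK2 : (a : K) ^ 2 - d * b ^ 2 = q ^ 2 := by exact_mod_cast congrArg (Rat.cast : ℚ → K) hq
  by_cases haq : a = -q
  · have hb : b = 0 := by
      have hd0 : (d : ℚ) ≠ 0 := fun h0 => h.not_isSquare (h0 ▸ IsSquare.zero)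
      have : (d : ℚ) * b ^ 2 = 0 := by rw [haq] at hq; linear_combination -hq
      simpa [hd0] using this
    exact ⟨-q, neg_ne_zero.2 hq0, 1, one_ne_zero, by rw [hab, hb, haq]; push_cast; ring⟩
  · have haq' : a + q ≠ 0 := fun h0 => haq (by linear_combination h0)
    have haqK : (a + q : K) ≠ 0 := by exact_mod_cast haq'
    have hz : (a + q + b * s : K) ≠ 0 := by
      intro h0
      refine haq' (h.eq_zero (a := a + q) (b := b) ?_).1
      push_cast
      exact h0
    refine ⟨(2 * (a + q))⁻¹, by simpa using haq', a + q + b * s, hz, ?_⟩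
    rw [hab]
    push_cast
    field_simp
    linear_combination (-(b : K) ^ 2) * h.coe_sq + hqK2

theorem natCast_dvd_quadraticDiscr_iff {p : ℕ} (hp : p.Prime) (hp3 : p % 4 = 3) :
    (p : ℤ) ∣ quadraticDiscr d ↔ (p : ℤ) ∣ d := by
  rw [quadraticDiscr]
  split_ifs
  · rfl
  · refine ⟨fun h => ?_, fun h => h.mul_left _⟩
    have hpZ : Prime (p : ℤ) := Nat.prime_iff_prime_int.1 hp
    refine (hpZ.dvd_or_dvd h).resolve_left fun h4 => ?_
    have h4' : p ∣ 2 ^ 2 := by exact_mod_cast h4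
    have := (Nat.prime_dvd_prime_iff_eq hp Nat.prime_two).1 (hp.dvd_of_dvd_pow h4')
    omega

/-- If `-1` times a nonzero square is represented by `a² - d b²`, then no prime `p ≡ 3 (mod 4)`
divides `d`. -/
theorem not_dvd_of_sq_add_sq_eq (hsf : Squarefree d) {a b q : ℚ} (hq : q ≠ 0)
    (hab : a ^ 2 + q ^ 2 = d * b ^ 2) {p : ℕ} (hp : p.Prime) (hp3 : p % 4 = 3) :
    ¬ (p : ℤ) ∣ d := by
  intro hpd
  have : Fact p.Prime := ⟨hp⟩
  have hb : b ≠ 0 := by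
    rintro rfl
    have := sq_pos_of_ne_zero hq
    nlinarith [sq_nonneg a]
  have hd0 : d ≠ 0 := hsf.ne_zero
  obtain ⟨A, Q, B, hB, hABQ⟩ : ∃ A Q B : ℤ, B ≠ 0 ∧ A ^ 2 + Q ^ 2 = d * B ^ 2 := by
    refine ⟨a.num * q.den * b.den, q.num * a.den * b.den, b.num * a.den * q.den, ?_, ?_⟩
    · simp [hb]
    · have ha' := Rat.num_div_den a
      have hb' := Rat.num_div_den b
      have hq' := Rat.num_div_den q
      have h1 : (a.den : ℚ) ≠ 0 := by exact_mod_cast a.den_nz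
      have h2 : (b.den : ℚ) ≠ 0 := by exact_mod_cast b.den_nz
      have h3 : (q.den : ℚ) ≠ 0 := by exact_mod_cast q.den_nz
      have : (((a.num * q.den * b.den) ^ 2 + (q.num * a.den * b.den) ^ 2 : ℤ) : ℚ) =
          ((d * (b.num * a.den * q.den) ^ 2 : ℤ) : ℚ) := by
        rw [← ha', ← hb', ← hq'] at hab
        field_simp at hab
        push_cast
        linear_combination hab
      exact_mod_cast this
  have hnat : (d * B ^ 2).natAbs = A.natAbs ^ 2 + Q.natAbs ^ 2 := by
    rw [← hABQ]
    zify
    rw [abs_of_nonneg (by positivity), sq_abs, sq_abs]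
  have hdB : (d * B ^ 2).natAbs ≠ 0 := by simp [hd0, hB]
  have heven := Nat.eq_sq_add_sq_iff.1 ⟨_, _, hnat⟩ p
    (Nat.mem_primeFactors.2 ⟨hp, Int.natCast_dvd.1 (hpd.mul_right _), hdB⟩) hp3
  rw [Int.natAbs_mul, Int.natAbs_pow, padicValNat.mul (by simpa using hd0) (by simpa using hB),
    padicValNat.pow] at heven
  have hval : padicValNat p d.natAbs = 1 := by
    have hsf' : Squarefree d.natAbs := Int.squarefree_natAbs.2 hsf
    have h1 := hsf'.natFactorization_le_one p
    rw [Nat.factorization_def _ hp] at h1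
    have h2 := one_le_padicValNat_of_dvd (by simpa using hd0) (Int.natCast_dvd.1 hpd)
    omega
  rw [hval] at heven
  grind

/-- A positive squarefree integer without prime factors `p ≡ 3 (mod 4)` is a primitive sum of
two squares. -/
theorem exists_sq_add_sq_eq (hsf : Squarefree d) (hd : 0 < d)
    (h3 : ∀ p : ℕ, p.Prime → p % 4 = 3 → ¬ (p : ℤ) ∣ d) :
    ∃ a b : ℤ, d = a ^ 2 + b ^ 2 ∧ IsCoprime (2 * a) b := by
  obtain ⟨x, y, hxy⟩ : ∃ x y : ℕ, d.natAbs = x ^ 2 + y ^ 2 := by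
    refine Nat.eq_sq_add_sq_iff.2 fun q hq hq3 =>
      absurd ?_ (h3 q (Nat.prime_of_mem_primeFactors hq) hq3)
    exact Int.natCast_dvd.2 (Nat.dvd_of_mem_primeFactors hq)
  have hd' : d = (x : ℤ) ^ 2 + (y : ℤ) ^ 2 := by
    zify at hxy
    rwa [abs_of_pos hd] at hxy
  have hcop : IsCoprime (x : ℤ) y := by
    rw [Int.isCoprime_iff_gcd_eq_one]
    obtain ⟨u, hu⟩ := Int.gcd_dvd_left (a := (x : ℤ)) (b := y)
    obtain ⟨v, hv⟩ := Int.gcd_dvd_right (a := (x : ℤ)) (b := y)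
    have := hsf (Int.gcd (x : ℤ) y) ⟨u ^ 2 + v ^ 2, by
      linear_combination hd' + ((x : ℤ) + Int.gcd x y * u) * hu + ((y : ℤ) + Int.gcd x y * v) * hv⟩
    simpa [Int.isUnit_iff_natAbs_eq] using this
  have hodd : Odd (x : ℤ) ∨ Odd (y : ℤ) := by
    by_contra! hc
    rw [Int.not_odd_iff_even, Int.not_odd_iff_even] at hc
    have := hcop.isUnit_of_dvd' hc.1.two_dvd hc.2.two_dvd
    norm_num [Int.isUnit_iff_natAbs_eq] at this
  rcases hodd with ho | ho
  · refine ⟨y, x, by rw [hd', add_comm], IsCoprime.mul_left ?_ hcop.symm⟩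
    exact Int.isCoprime_two_left.2 ho
  · exact ⟨x, y, hd', IsCoprime.mul_left (Int.isCoprime_two_left.2 ho) hcop⟩

theorem relIndex_ratSelmer_eq_one (h : IsQuadraticGenerator d s) (hsf : Squarefree d)
    (hd : 0 < d → ∃ p : ℕ, p.Prime ∧ p % 4 = 3 ∧ (p : ℤ) ∣ quadraticDiscr d) :
    (ratSelmer K).relIndex (selmer K) = 1 := by
  refine Subgroup.relIndex_eq_one.2 fun x hx => h.mem_ratSelmer hx ?_
  by_contra hneg
  have hne : Algebra.norm ℚ (x : K) ≠ 0 := Algebra.norm_ne_zero_iff.2 x.ne_zero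
  obtain ⟨q, hq⟩ := exists_abs_norm_eq_sq_of_mem_selmer hx
  rw [abs_of_nonpos (not_lt.1 hneg)] at hq
  have hq0 : q ≠ 0 := by
    rintro rfl
    simp at hq
  obtain ⟨a, b, hab⟩ := h.exists_eq (x : K)
  rw [hab, h.norm_eq] at hq
  have hrep : a ^ 2 + q ^ 2 = d * b ^ 2 := by linear_combination -hq
  have hd0 : 0 < d := by
    by_contra hd0
    have hd0' : (d : ℚ) ≤ 0 := by exact_mod_cast not_lt.1 hd0
    nlinarith [sq_pos_of_ne_zero hq0, sq_nonneg a, mul_nonneg (neg_nonneg.2 hd0') (sq_nonneg b)]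
  obtain ⟨p, hp, hp3, hpd⟩ := hd hd0
  exact not_dvd_of_sq_add_sq_eq hsf hq0 hrep hp hp3
    ((natCast_dvd_quadraticDiscr_iff hp hp3).1 hpd)

theorem relIndex_ratSelmer_eq_two (h : IsQuadraticGenerator d s) (hsf : Squarefree d) (hd : 0 < d)
    (h3 : ¬ ∃ p : ℕ, p.Prime ∧ p % 4 = 3 ∧ (p : ℤ) ∣ quadraticDiscr d) :
    (ratSelmer K).relIndex (selmer K) = 2 := by
  obtain ⟨a, b, hab, hcop⟩ := exists_sq_add_sq_eq hsf hd fun p hp hp3 hpd =>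
    h3 ⟨p, hp, hp3, (natCast_dvd_quadraticDiscr_iff hp hp3).2 hpd⟩
  have hb : b ≠ 0 := by
    rintro rfl
    refine h.not_isSquare ⟨a, ?_⟩
    rw [hab]
    push_cast
    ring
  have hx : ((a : ℚ) + (1 : ℚ) * s : K) ≠ 0 := fun h0 => one_ne_zero (h.eq_zero h0).2
  have hnorm : Algebra.norm ℚ ((a : ℚ) + (1 : ℚ) * s : K) < 0 := by
    rw [h.norm_eq, hab]
    push_cast
    have : (0 : ℚ) < b ^ 2 := by positivity
    linarith
  have hmem : Units.mk0 _ hx ∈ selmer K := by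
    obtain ⟨u, v, huv⟩ := hcop
    have huv' : (u : 𝓞 K) * (2 * a) + v * b = 1 := by
      exact_mod_cast congrArg (Int.cast : ℤ → 𝓞 K) huv
    have hs := h.sq_eq
    rw [hab] at hs
    push_cast at hs
    refine mem_selmer_of_sq_eq_mul (x := a + s) (y := b) (z := s - a) (α := u) (β := v) (γ := -u)
      (by simp) ?_ ?_
    · linear_combination -hs
    · linear_combination huv'
  refine Subgroup.relIndex_eq_two_iff.2 ⟨_, hmem, fun y hy => ?_⟩
  have hiff {z : Kˣ} (hz : z ∈ selmer K) : z ∈ ratSelmer K ↔ 0 < Algebra.norm ℚ (z : K) :=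
    ⟨h.norm_pos_of_mem_ratSelmer, h.mem_ratSelmer hz⟩
  rw [hiff hy, hiff (mul_mem hy hmem), Units.val_mul, map_mul, Units.val_mk0]
  rcases lt_or_gt_of_ne (Algebra.norm_ne_zero_iff.2 y.ne_zero : Algebra.norm ℚ (y : K) ≠ 0)
    with hlt | hgt
  · exact Or.inl ⟨mul_pos_of_neg_of_neg hlt hnorm, hlt.not_gt⟩
  · exact Or.inr ⟨hgt, (mul_neg_of_pos_of_neg hgt hnorm).not_gt⟩

theorem units_rank_of_pos (h : IsQuadraticGenerator d s) (hd : 0 < d) : Units.rank K = 1 := by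
  have hreal (φ : K →+* ℂ) : ComplexEmbedding.IsReal φ := by
    rw [ComplexEmbedding.isReal_iff]
    ext x
    obtain ⟨a, b, rfl⟩ := h.exists_eq x
    have hs : φ s = ((φ s).re : ℂ) := by
      have hsq := h.embedding_sq φ
      have him := congrArg Complex.im hsq
      have hre := congrArg Complex.re hsq
      simp only [sq, Complex.mul_im, Complex.mul_re, Complex.intCast_im, Complex.intCast_re]
        at him hre
      have hd' : (0 : ℝ) < d := by exact_mod_cast hd
      have h0 : (φ s).im = 0 := by
        by_contra h0
        have : (φ s).re = 0 := by
          have : (φ s).re * (φ s).im = 0 := by linarith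
          exact (mul_eq_zero.1 this).resolve_right h0
        rw [this] at hre
        nlinarith [mul_self_nonneg (φ s).im]
      exact Complex.ext (by simp) (by simpa using h0)
    have hs' : (starRingEnd ℂ) (φ s) = φ s := by rw [hs, Complex.conj_ofReal]
    simp [ComplexEmbedding.conjugate_coe_eq, hs']
  have : IsTotallyReal K := ⟨fun v => by
    rw [← v.mk_embedding]
    exact ⟨v.embedding, hreal _, rfl⟩⟩
  have h1 := IsTotallyReal.finrank K
  have h2 := InfinitePlace.card_add_two_mul_card_eq_rank K
  have h4 := InfinitePlace.card_eq_nrRealPlaces_add_nrComplexPlaces K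
  rw [h.finrank_eq_two] at h1 h2
  rw [Units.rank]
  omega

theorem units_rank_of_neg (h : IsQuadraticGenerator d s) (hd : d < 0) : Units.rank K = 0 := by
  have : IsTotallyComplex K := ⟨fun v => by
    rw [← InfinitePlace.not_isReal_iff_isComplex, InfinitePlace.isReal_iff,
      ComplexEmbedding.isReal_iff]
    intro hφ
    have hs := h.embedding_sq v.embedding
    have hconj := congrArg (fun f : K →+* ℂ => f s) hφ
    simp only [ComplexEmbedding.conjugate_coe_eq] at hconj
    rw [← Complex.conj_eq_iff_re.1 hconj] at hs
    have hs' : (v.embedding s).re ^ 2 = (d : ℝ) := by exact_mod_cast hs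
    have hd' : (d : ℝ) < 0 := by exact_mod_cast hd
    nlinarith [sq_nonneg (v.embedding s).re]⟩
  have h1 := IsTotallyComplex.finrank K
  have h2 := InfinitePlace.card_add_two_mul_card_eq_rank K
  have h4 := InfinitePlace.card_eq_nrRealPlaces_add_nrComplexPlaces K
  rw [h.finrank_eq_two] at h1 h2
  rw [Units.rank]
  omega

theorem two_pow_mul_card_classGroup (h : IsQuadraticGenerator d s) (hsf : Squarefree d) :
    2 ^ (Units.rank K + 1) *
      Nat.card (ClassGroup (𝓞 K) ⧸ (powMonoidHom 2 : ClassGroup (𝓞 K) →* _).range) =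
    2 ^ (quadraticDiscr d).natAbs.primeFactors.card * (ratSelmer K).relIndex (selmer K) := by
  rw [← relIndex_sq_selmer, ← h.relIndex_sq_ratSelmer hsf,
    Subgroup.relIndex_mul_relIndex _ _ _ sq_le_ratSelmer ratSelmer_le]

theorem eq_two_pow_of_two_pow_mul_eq {k m n : ℕ} (hkn : 2 ^ k * n = 2 ^ m) :
    n = 2 ^ (m - k) := by
  have hk : k ≤ m := (Nat.pow_dvd_pow_iff_le_right (by norm_num)).1 (Dvd.intro _ hkn)
  have h2 : 2 ^ k * n = 2 ^ k * 2 ^ (m - k) := by rw [hkn, ← pow_add, Nat.add_sub_cancel' hk]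
  exact Nat.eq_of_mul_eq_mul_left (by positivity) h2

theorem card_classGroup_quotient_sq (h : IsQuadraticGenerator d s) (hsf : Squarefree d) :
    ((0 < d ∧ ∃ p : ℕ, p.Prime ∧ p % 4 = 3 ∧ (p : ℤ) ∣ quadraticDiscr d) →
      Nat.card (ClassGroup (𝓞 K) ⧸ (powMonoidHom 2 : ClassGroup (𝓞 K) →* _).range) =
        2 ^ ((quadraticDiscr d).natAbs.primeFactors.card - 2)) ∧
    (¬ (0 < d ∧ ∃ p : ℕ, p.Prime ∧ p % 4 = 3 ∧ (p : ℤ) ∣ quadraticDiscr d) →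
      Nat.card (ClassGroup (𝓞 K) ⧸ (powMonoidHom 2 : ClassGroup (𝓞 K) →* _).range) =
        2 ^ ((quadraticDiscr d).natAbs.primeFactors.card - 1)) := by
  have hcard := h.two_pow_mul_card_classGroup hsf
  constructor
  · rintro ⟨hd, hp⟩
    rw [h.units_rank_of_pos hd, h.relIndex_ratSelmer_eq_one hsf fun _ => hp, mul_one] at hcard
    exact eq_two_pow_of_two_pow_mul_eq hcard
  · intro hnot
    refine eq_two_pow_of_two_pow_mul_eq (k := 1) ?_
    rcases lt_or_gt_of_ne hsf.ne_zero with hd | hd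
    · rwa [h.units_rank_of_neg hd, h.relIndex_ratSelmer_eq_one hsf fun hd' => absurd hd' hd.not_gt,
        mul_one] at hcard
    · rw [h.units_rank_of_pos hd, h.relIndex_ratSelmer_eq_two hsf hd fun hp => hnot ⟨hd, hp⟩,
        pow_succ, mul_right_comm] at hcard
      exact Nat.eq_of_mul_eq_mul_right two_pos hcard

end IsQuadraticGenerator

end Quadratic

end NumberField

theorem not_isSquare_ratCast_of_squarefree {d : ℤ} (hsf : Squarefree d) (hd1 : d ≠ 1) :
    ¬ IsSquare (d : ℚ) := by
  rw [Rat.isSquare_intCast_iff]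
  rintro ⟨n, rfl⟩
  rcases Int.isUnit_iff.1 (hsf n dvd_rfl) with rfl | rfl <;> simp at hd1

theorem exists_eq_add_mul_of_mem_adjoin {d : ℤ} {c : ℂ} (hc : c ^ 2 = d)
    {x : ℂ} (hx : x ∈ IntermediateField.adjoin ℚ ({c} : Set ℂ)) : ∃ a b : ℚ, x = a + b * c := by
  have hInt : IsIntegral ℚ c := by
    refine ⟨Polynomial.X ^ 2 - Polynomial.C (d : ℚ), by monicity!, ?_⟩
    simp only [Polynomial.eval₂_sub, Polynomial.eval₂_pow, Polynomial.eval₂_X, Polynomial.eval₂_C]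
    simp [hc]
  rw [← IntermediateField.mem_toSubalgebra,
    IntermediateField.adjoin_simple_toSubalgebra_of_isAlgebraic hInt.isAlgebraic] at hx
  induction hx using Algebra.adjoin_induction with
  | mem x hx => exact ⟨0, 1, by simpa using hx⟩
  | algebraMap r => exact ⟨r, 0, by simp⟩
  | add x y _ _ hx hy =>
    obtain ⟨a, b, rfl⟩ := hx
    obtain ⟨a', b', rfl⟩ := hy
    exact ⟨a + a', b + b', by push_cast; ring⟩
  | mul x y _ _ hx hy =>
    obtain ⟨a, b, rfl⟩ := hx
    obtain ⟨a', b', rfl⟩ := hy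
    refine ⟨a * a' + d * b * b', a * b' + b * a', ?_⟩
    push_cast
    linear_combination (b * b' : ℂ) * hc

/-- (Gauss's genus theorem.)  For `K = ℚ(√d)` with `d` squarefree,
`d ≠ 0, 1`, discriminant `δ_K` and `m` the number of distinct primes dividing `δ_K`,
the quotient `C_K/C_K²` of the class group by its subgroup of squares has order
`2^(m-2)` if `d > 0` and some prime `p ≡ 3 (mod 4)` divides `δ_K`, and order `2^(m-1)`
otherwise. -/
theorem gauss_genus_theorem
    (d : ℤ) (hsf : Squarefree d) (hd0 : d ≠ 0) (hd1 : d ≠ 1)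
    (c : ℂ) (hc : c ^ 2 = (d : ℂ))
    (K : IntermediateField ℚ ℂ) (hK : K = IntermediateField.adjoin ℚ ({c} : Set ℂ))
    [NumberField K]
    (δ : ℤ) (hδ : δ = if d % 4 = 1 then d else 4 * d)
    (m : ℕ) (hm : m = δ.natAbs.primeFactors.card) :
    ((0 < d ∧ ∃ p : ℕ, p.Prime ∧ p % 4 = 3 ∧ (p : ℤ) ∣ δ) →
        Nat.card (ClassGroup (𝓞 K) ⧸ (powMonoidHom 2 : ClassGroup (𝓞 K) →* _).range) =
          2 ^ (m - 2)) ∧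
      (¬(0 < d ∧ ∃ p : ℕ, p.Prime ∧ p % 4 = 3 ∧ (p : ℤ) ∣ δ) →
        Nat.card (ClassGroup (𝓞 K) ⧸ (powMonoidHom 2 : ClassGroup (𝓞 K) →* _).range) =
          2 ^ (m - 1)) := by
  have hcK : c ∈ K := hK ▸ IntermediateField.mem_adjoin_simple_self ℚ c
  have hcK2 : (⟨c, hcK⟩ : K) ^ 2 = d := Subtype.ext (by simpa using hc)
  have hInt : IsIntegral ℤ (⟨c, hcK⟩ : K) := by
    refine IsIntegral.of_pow two_pos ?_
    rw [hcK2]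
    exact isIntegral_algebraMap (R := ℤ) (x := d)
  obtain ⟨s, hs⟩ : ∃ s : 𝓞 K, (s : K) = ⟨c, hcK⟩ := ⟨⟨_, hInt⟩, rfl⟩
  have h : IsQuadraticGenerator d s :=
    { sq_eq := RingOfIntegers.coe_injective (by
        rw [map_pow, map_intCast]
        exact (congrArg (· ^ 2) hs).trans hcK2)
      not_isSquare := not_isSquare_ratCast_of_squarefree hsf hd1
      exists_eq := by
        rintro ⟨x, hx⟩
        obtain ⟨a, b, hab⟩ := exists_eq_add_mul_of_mem_adjoin hc (hK ▸ hx)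
        refine ⟨a, b, Subtype.ext ?_⟩
        rw [hs]
        push_cast
        exact hab }
  subst hm hδ
  exact h.card_classGroup_quotient_sq hsf
end

section
/- Let p be a prime, q a power of p, and k = 𝔽_q(T). For every α ∈ k there exist w ∈ k, an integer r ≥ 0, distinct monic irreducible polynomials P_1, …, P_r ∈ 𝔽_q[T], polynomials Q_1, …, Q_r ∈ 𝔽_q[T], integers e_1, …, e_r ≥ 1, and f ∈ 𝔽_q[T], such that: α = Σ_{i=1}^r Q_i/P_i^{e_i} + f + (w^p − w), and for each i: p ∤ e_i, gcd(Q_i, P_i) = 1, and deg Q_i < e_i · deg P_i; moreover either f ∈ 𝔽_q or p ∤ deg f. (Normalization of Artin–Schreier equations y^p − y = α over k.) -/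
open Polynomial

section

variable {K : Type*} [Field K] [PerfectField K] (p : ℕ) [Fact p.Prime] [CharP K p]

/-- Over a perfect field of characteristic `p`, every polynomial is congruent to a `p`-th power
modulo an irreducible polynomial. -/
theorem exists_pow_congr_mod_irreducible {P : K[X]} (hm : P.Monic) (hP : Irreducible P)
    (a : K[X]) : ∃ b : K[X], b.degree < P.degree ∧ P ∣ a - b ^ p := by
  have : Fact (Irreducible P) := ⟨hP⟩
  have : CharP (AdjoinRoot P) p :=
    charP_of_injective_algebraMap (algebraMap K (AdjoinRoot P)).injective p
  have : Module.Finite K (AdjoinRoot P) := (AdjoinRoot.powerBasis hP.ne_zero).finite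
  have : PerfectField (AdjoinRoot P) := Algebra.IsAlgebraic.perfectField (K := K)
  obtain ⟨y, hy⟩ := surjective_frobenius (AdjoinRoot P) p (AdjoinRoot.mk P a)
  obtain ⟨c, rfl⟩ := AdjoinRoot.mk_surjective y
  refine ⟨c %ₘ P, degree_modByMonic_lt c hm, ?_⟩
  have hc : AdjoinRoot.mk P (c %ₘ P) = AdjoinRoot.mk P c := by
    rw [AdjoinRoot.mk_eq_mk, ← dvd_neg, neg_sub]
    exact ⟨c /ₘ P, by linear_combination (modByMonic_add_div c P).symm⟩
  rw [← AdjoinRoot.mk_eq_mk, map_pow, hc, ← hy, frobenius_def]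

/-- A fraction with denominator a power of `P` is, up to `w ^ p - w`, either zero or a reduced
proper fraction whose denominator is a power of `P` with exponent prime to `p`. -/
theorem exists_normalized_div_pow {P : K[X]} (hm : P.Monic) (hP : Irreducible P)
    (n : ℕ) (a : K[X]) (ha : a.degree < (P ^ n).degree) :
    ∃ (Q : K[X]) (e : ℕ) (w : RatFunc K),
      (Q ≠ 0 → 1 ≤ e ∧ ¬ p ∣ e ∧ IsCoprime Q P ∧ Q.natDegree < e * P.natDegree) ∧
      algebraMap K[X] (RatFunc K) a / algebraMap K[X] (RatFunc K) (P ^ n) =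
        algebraMap K[X] (RatFunc K) Q / algebraMap K[X] (RatFunc K) (P ^ e) + (w ^ p - w) := by
  have hp : p.Prime := Fact.out
  have hP0 : algebraMap K[X] (RatFunc K) P ≠ 0 := by simpa using hP.ne_zero
  induction n generalizing a with
  | zero =>
    have : a = 0 := by simpa [Nat.WithBot.lt_zero_iff] using ha
    exact ⟨0, 0, 0, by simp, by simp [this, hp.ne_zero]⟩
  | succ n ih =>
    have step : ∀ c : K[X], (P * c).degree < (P ^ (n + 1)).degree →
        c.degree < (P ^ n).degree := fun c hc ↦ by
      rw [pow_succ', degree_mul, degree_mul] at hc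
      exact lt_of_add_lt_add_left hc
    by_cases hPa : P ∣ a
    · obtain ⟨c, rfl⟩ := hPa
      obtain ⟨Q, e, w, hQ, h⟩ := ih c (step c ha)
      refine ⟨Q, e, w, hQ, ?_⟩
      rw [← h, pow_succ', map_mul, map_mul, mul_div_mul_left _ _ hP0]
    by_cases hpn : p ∣ n + 1
    · obtain ⟨m, hm'⟩ := hpn
      have hm0 : m ≠ 0 := by rintro rfl; simp at hm'
      obtain ⟨l, rfl⟩ := Nat.exists_eq_add_one_of_ne_zero hm0
      obtain ⟨j, hj⟩ := Nat.exists_eq_add_of_le hp.two_le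
      obtain ⟨b, hb, hab⟩ := exists_pow_congr_mod_irreducible p hm hP a
      set t := (j + 1) * (l + 1) with ht
      have hnt : n + 1 = t + (l + 1) := by rw [hm', ht, hj]; ring
      have hdvd : P ∣ a - b ^ p + b * P ^ t :=
        dvd_add hab (dvd_mul_of_dvd_right (dvd_pow_self P (by positivity)) b)
      obtain ⟨c, hc⟩ := hdvd
      have hbp : (b ^ p).degree < (P ^ (n + 1)).degree := by
        by_cases hb0 : b = 0
        · rw [hb0, zero_pow hp.ne_zero, degree_zero, bot_lt_iff_ne_bot, Ne, degree_eq_bot]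
          exact pow_ne_zero _ hP.ne_zero
        apply degree_lt_degree
        have := natDegree_lt_natDegree hb0 hb
        rw [natDegree_pow, natDegree_pow, hm']
        calc p * b.natDegree < p * P.natDegree := Nat.mul_lt_mul_of_pos_left this hp.pos
          _ ≤ p * (l + 1) * P.natDegree := by gcongr; exact Nat.le_mul_of_pos_right _ (by omega)
      have hbt : (b * P ^ t).degree < (P ^ (n + 1)).degree := by
        by_cases hb0 : b = 0
        · rw [hb0, zero_mul, degree_zero, bot_lt_iff_ne_bot, Ne, degree_eq_bot]
          exact pow_ne_zero _ hP.ne_zero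
        apply degree_lt_degree
        have := natDegree_lt_natDegree hb0 hb
        rw [natDegree_mul hb0 (pow_ne_zero _ hP.ne_zero), natDegree_pow, natDegree_pow, hnt]
        nlinarith [Nat.zero_le (l * P.natDegree)]
      have hcdeg : (P * c).degree < (P ^ (n + 1)).degree := by
        rw [← hc]
        exact (degree_add_le _ _).trans_lt
          (max_lt ((degree_sub_le _ _).trans_lt (max_lt ha hbp)) hbt)
      obtain ⟨Q, e, w, hQ, h⟩ := ih c (step c hcdeg)
      set A := algebraMap K[X] (RatFunc K)
      have : CharP (RatFunc K) p :=
        charP_of_injective_algebraMap (algebraMap K (RatFunc K)).injective p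
      refine ⟨Q, e, w + A b / A (P ^ (l + 1)), hQ, ?_⟩
      have hc' : A c / A (P ^ n) = (A a - A b ^ p + A b * A P ^ t) / A P ^ (n + 1) := by
        rw [← map_pow A b, ← map_pow A P t, ← map_mul, ← map_sub, ← map_add, hc, map_mul, map_pow,
          pow_succ', mul_div_mul_left _ _ hP0]
      have h1 : A b ^ p / A P ^ (n + 1) = (A b / A P ^ (l + 1)) ^ p := by
        rw [div_pow, ← pow_mul, hm', mul_comm]
      have h2 : A b * A P ^ t / A P ^ (n + 1) = A b / A P ^ (l + 1) := by
        rw [hnt, pow_add, mul_comm (A b), mul_div_mul_left _ _ (pow_ne_zero _ hP0)]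
      rw [hc', add_div, sub_div, h1, h2] at h
      rw [add_pow_char, map_pow A P (n + 1), map_pow A P (l + 1)]
      linear_combination h
    · refine ⟨a, n + 1, 0, fun ha0 ↦ ⟨by omega, hpn, ?_, ?_⟩, by simp [hp.ne_zero]⟩
      · exact ((hP.coprime_iff_not_dvd).2 hPa).symm
      · simpa using natDegree_lt_natDegree ha0 ha

/-- Every polynomial over a perfect field is, up to `w ^ p - w`, constant or of degree prime
to `p`. -/
theorem exists_normalized_polynomial (g : K[X]) :
    ∃ f w : K[X], (f.natDegree = 0 ∨ ¬ p ∣ f.natDegree) ∧ g = f + (w ^ p - w) := by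
  have hp : p.Prime := Fact.out
  induction hn : g.natDegree using Nat.strong_induction_on generalizing g with
  | _ n ih =>
    by_cases hg : g.natDegree = 0 ∨ ¬ p ∣ g.natDegree
    · exact ⟨g, 0, hg, by simp [hp.ne_zero]⟩
    push Not at hg
    obtain ⟨hg0, m, hm⟩ := hg
    obtain ⟨d, hd⟩ := surjective_frobenius K p g.leadingCoeff
    rw [frobenius_def] at hd
    have hm0 : 0 < m := Nat.pos_of_ne_zero fun h ↦ hg0 (by simp [hm, h])
    set v : K[X] := C d * X ^ m with hv
    have hvp : v ^ p = C g.leadingCoeff * X ^ g.natDegree := by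
      rw [hv, mul_pow, ← C_pow, hd, ← pow_mul, hm, mul_comm m]
    have hlt : (g - (v ^ p - v)).natDegree < g.natDegree := by
      have hvlt : v.natDegree < g.natDegree := by
        refine (natDegree_C_mul_X_pow_le d m).trans_lt ?_
        rw [hm]
        exact lt_mul_left hm0 hp.one_lt
      have he : (g.eraseLead).natDegree < g.natDegree :=
        (eraseLead_natDegree_le g).trans_lt (by omega)
      have : g - (v ^ p - v) = g.eraseLead + v := by
        rw [hvp, ← self_sub_C_mul_X_pow]; ring
      rw [this]
      exact (natDegree_add_le _ _).trans_lt (max_lt he hvlt)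
    obtain ⟨f, w, hf, h⟩ := ih _ (hn ▸ hlt) _ rfl
    refine ⟨f, w + v, hf, ?_⟩
    rw [add_pow_char]
    linear_combination h

end

/-- Partial fraction decomposition along the monic irreducible factors of the denominator. -/
theorem RatFunc.exists_partialFractions {K : Type*} [Field K] (α : RatFunc K) :
    ∃ (s : Finset K[X]) (n : K[X] → ℕ) (g : K[X]) (a : K[X] → K[X]),
      (∀ P ∈ s, P.Monic ∧ Irreducible P ∧ (a P).degree < (P ^ n P).degree) ∧
      α = algebraMap K[X] (RatFunc K) g + ∑ P ∈ s,
        algebraMap K[X] (RatFunc K) (a P) / algebraMap K[X] (RatFunc K) (P ^ n P) := by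
  classical
  let F := UniqueFactorizationMonoid.normalizedFactors α.denom
  have hF : ∀ P ∈ F.toFinset, P.Monic ∧ Irreducible P := fun P hP ↦ by
    rw [Multiset.mem_toFinset] at hP
    have hi := UniqueFactorizationMonoid.irreducible_of_normalized_factor P hP
    refine ⟨?_, hi⟩
    rw [← UniqueFactorizationMonoid.normalize_normalized_factor P hP]
    exact monic_normalize hi.ne_zero
  have hprod : ∏ P ∈ F.toFinset, P ^ F.count P = α.denom := by
    rw [← Finset.prod_multiset_count,
      UniqueFactorizationMonoid.prod_normalizedFactors_eq α.denom_ne_zero,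
      α.monic_denom.normalize_eq_self]
  obtain ⟨g, a, ha, h⟩ := div_prod_eq_quo_add_sum_rem_div (K := RatFunc K) α.num
    (g := fun P ↦ P ^ F.count P) (s := F.toFinset) (fun P hP ↦ (hF P hP).1.pow _)
    (fun P hP R hR hPR ↦ IsCoprime.pow <| (hF P hP).2.coprime_iff_not_dvd.2 fun hd ↦ hPR <|
      eq_of_monic_of_associated (hF P hP).1 (hF R hR).1 <|
        (hF P hP).2.associated_of_dvd (hF R hR).2 hd)
  refine ⟨F.toFinset, fun P ↦ F.count P, g, a,
    fun P hP ↦ ⟨(hF P hP).1, (hF P hP).2, ha P hP⟩, ?_⟩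
  simp only [Algebra.cast] at h
  rw [← map_prod, hprod] at h
  exact (RatFunc.num_div_denom α).symm.trans h

/-- (Normalization of Artin–Schreier equations over `k = 𝔽_q(T)`.)
Every `α ∈ k` can be written as `α = Σ_{i=1}^r Q_i/P_i^{e_i} + f + (w^p - w)` with the
`P_i` distinct monic irreducibles, `p ∤ e_i`, `gcd(Q_i, P_i) = 1`,
`deg Q_i < e_i · deg P_i`, and `f` a polynomial that is constant or of degree prime to `p`. -/
theorem artinSchreier_normalization
    (p : ℕ) (hp : p.Prime) (Fq : Type*) [Field Fq] [Fintype Fq] [CharP Fq p]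
    (α : RatFunc Fq) :
    ∃ (r : ℕ) (P Q : Fin r → Polynomial Fq) (e : Fin r → ℕ) (f : Polynomial Fq)
      (w : RatFunc Fq),
      (∀ i, (P i).Monic ∧ Irreducible (P i)) ∧
      Function.Injective P ∧
      (∀ i, 1 ≤ e i ∧ ¬ p ∣ e i ∧ IsCoprime (Q i) (P i) ∧
        (Q i).natDegree < e i * (P i).natDegree) ∧
      (f.natDegree = 0 ∨ ¬ p ∣ f.natDegree) ∧
      α = (∑ i, algebraMap (Polynomial Fq) (RatFunc Fq) (Q i) /
              algebraMap (Polynomial Fq) (RatFunc Fq) (P i ^ e i)) +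
            algebraMap (Polynomial Fq) (RatFunc Fq) f + (w ^ p - w) := by
  classical
  have : Fact p.Prime := ⟨hp⟩
  have : CharP (RatFunc Fq) p :=
    charP_of_injective_algebraMap (algebraMap Fq (RatFunc Fq)).injective p
  obtain ⟨s, n, g, a, hs, hα⟩ := α.exists_partialFractions
  obtain ⟨f, v, hf, hg⟩ := exists_normalized_polynomial p g
  choose! Q e w hQ hw using fun P (hP : P ∈ s) ↦
    exists_normalized_div_pow p (hs P hP).1 (hs P hP).2.1 (n P) (a P) (hs P hP).2.2
  let t := s.filter fun P ↦ Q P ≠ 0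
  have ht : ∀ i : Fin t.card, (t.equivFin.symm i : Fq[X]) ∈ s ∧ Q (t.equivFin.symm i) ≠ 0 :=
    fun i ↦ Finset.mem_filter.1 (t.equivFin.symm i).2
  refine ⟨t.card, fun i ↦ t.equivFin.symm i, fun i ↦ Q (t.equivFin.symm i),
    fun i ↦ e (t.equivFin.symm i), f, algebraMap _ _ v + ∑ P ∈ s, w P,
    fun i ↦ ⟨(hs _ (ht i).1).1, (hs _ (ht i).1).2.1⟩,
    Subtype.val_injective.comp t.equivFin.symm.injective,
    fun i ↦ hQ _ (ht i).1 (ht i).2, hf, ?_⟩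
  have hsum : ∑ i : Fin t.card, algebraMap Fq[X] (RatFunc Fq) (Q (t.equivFin.symm i)) /
      algebraMap Fq[X] (RatFunc Fq) ((t.equivFin.symm i : Fq[X]) ^ e (t.equivFin.symm i)) =
      ∑ P ∈ s, algebraMap Fq[X] (RatFunc Fq) (Q P) / algebraMap Fq[X] (RatFunc Fq) (P ^ e P) := by
    rw [Equiv.sum_comp t.equivFin.symm fun P : t ↦ algebraMap Fq[X] (RatFunc Fq) (Q P) /
      algebraMap Fq[X] (RatFunc Fq) ((P : Fq[X]) ^ e P), Finset.sum_coe_sort t fun P ↦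
      algebraMap Fq[X] (RatFunc Fq) (Q P) / algebraMap Fq[X] (RatFunc Fq) (P ^ e P)]
    refine Finset.sum_filter_of_ne fun P _ hne hQ0 ↦ hne ?_
    rw [hQ0, map_zero, zero_div]
  rw [hsum, hα, Finset.sum_congr rfl hw, hg, Finset.sum_add_distrib, Finset.sum_sub_distrib,
    add_pow_char, sum_pow_char, map_add, map_sub, map_pow]
  ring
end

section
/- Let p be a prime, q a power of p, k = 𝔽_q(T), and n ≥ 1. Let W_n(k) denote the ring of p-typical Witt vectors of length n over k, with Witt addition ⊞ and subtraction ⊖, and let F : W_n(k) → W_n(k) be the map raising each Witt component to the p-th power. Let β⃗ ∈ W_n(k) and let P_1, …, P_r be distinct monic irreducible polynomials in 𝔽_q[T] such that every component of β⃗, as a rational function, has all monic irreducible factors of its denominator among P_1, …, P_r (i.e., finite poles only at the P_i). Then there exist α⃗, δ⃗_1, …, δ⃗_r, μ⃗ ∈ W_n(k) with β⃗ = δ⃗_1 ⊞ ⋯ ⊞ δ⃗_r ⊞ μ⃗ ⊞ (F(α⃗) ⊖ α⃗), such that: for each i and each 1 ≤ j ≤ n, the j-th component δ_{ij} of δ⃗_i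 is either 0 or of the form Q_{ij}/P_i^{e_{ij}} with e_{ij} ≥ 1, p ∤ e_{ij}, gcd(Q_{ij}, P_i) = 1, and deg Q_{ij} < e_{ij} · deg P_i; and each component μ_j of μ⃗ is a polynomial f_j ∈ 𝔽_q[T] with either f_j ∈ 𝔽_q or p ∤ deg f_j. -/
open Polynomial

/-- The map `F` on truncated Witt vectors raising each Witt component to the `p`-th
power. -/
def wittComponentPow (p n : ℕ) {R : Type*} [CommRing R]
    (x : TruncatedWittVector p n R) : TruncatedWittVector p n R :=
  TruncatedWittVector.mk p fun i => x.coeff i ^ p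

namespace WittVector

variable {p : ℕ} [Fact p.Prime] {R : Type*} [CommRing R]

/-- The additive homomorphism `V ^ m` on Witt vectors. -/
noncomputable def verschiebungPow (p : ℕ) [Fact p.Prime] (R : Type*) [CommRing R] (m : ℕ) :
    WittVector p R →+ WittVector p R where
  toFun := verschiebung^[m]
  map_zero' := iterate_map_zero verschiebung m
  map_add' := iterate_map_add verschiebung m

theorem verschiebungPow_coeff_of_lt (x : WittVector p R) {m j : ℕ} (h : j < m) :
    (verschiebungPow p R m x).coeff j = 0 :=
  iterate_verschiebung_coeff_eq_zero x h

theorem verschiebungPow_coeff_add (x : WittVector p R) (m j : ℕ) :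
    (verschiebungPow p R m x).coeff (j + m) = x.coeff j :=
  iterate_verschiebung_coeff x m j

theorem verschiebungPow_coeff_self (x : WittVector p R) (m : ℕ) :
    (verschiebungPow p R m x).coeff m = x.coeff 0 := by
  simpa using verschiebungPow_coeff_add x m 0

theorem verschiebungPow_teichmuller_coeff_of_ne (d : R) {m j : ℕ} (h : j ≠ m) :
    (verschiebungPow p R m (teichmuller p d)).coeff j = 0 := by
  rcases lt_or_gt_of_ne h with h | h
  · exact verschiebungPow_coeff_of_lt _ h
  · obtain ⟨i, rfl⟩ := Nat.exists_eq_add_of_lt h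
    rw [show m + i + 1 = (i + 1) + m by ring, verschiebungPow_coeff_add]
    exact teichmuller_coeff_pos p d _ i.succ_pos

theorem exists_verschiebungPow_eq {x : WittVector p R} {m : ℕ} (h : ∀ j < m, x.coeff j = 0) :
    ∃ y, verschiebungPow p R m y = x :=
  ⟨x.shift m, (eq_iterate_verschiebung h).symm⟩

theorem frobenius_verschiebungPow_teichmuller [CharP R p] (a : R) (m : ℕ) :
    frobenius (verschiebungPow p R m (teichmuller p a)) =
      verschiebungPow p R m (teichmuller p (a ^ p)) := by
  have hp : p ≠ 0 := (Fact.out : p.Prime).ne_zero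
  refine WittVector.ext fun j => ?_
  rw [coeff_frobenius_charP]
  rcases eq_or_ne j m with rfl | hj
  · simp only [verschiebungPow_coeff_self, teichmuller_coeff_zero]
  · simp only [verschiebungPow_teichmuller_coeff_of_ne _ hj, zero_pow hp]

/-- If every element of `R` is, modulo `a ^ p - a`, a sum of elements of the sets `D i`, then every
Witt vector over `R` is, modulo `F α - α` and up to any finite precision, a sum of Witt vectors
with components in the sets `D i`. -/
theorem exists_sum_add_frobenius_sub [CharP R p] {ι : Type*} [Fintype ι] (D : ι → Set R)
    (hD0 : ∀ i, 0 ∈ D i)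
    (hD : ∀ c : R, ∃ (d : ι → R) (a : R), (∀ i, d i ∈ D i) ∧ c = ∑ i, d i + (a ^ p - a))
    (β : WittVector p R) (m : ℕ) :
    ∃ (δ : ι → WittVector p R) (α : WittVector p R),
      (∀ i j, (δ i).coeff j ∈ D i) ∧ (∀ i j, m ≤ j → (δ i).coeff j = 0) ∧
      ∀ j < m, (β - (∑ i, δ i + (frobenius α - α))).coeff j = 0 := by
  induction m with
  | zero => exact ⟨0, 0, by simpa using hD0, by simp, by simp⟩
  | succ m ih =>
    obtain ⟨δ, α, hδ, hδm, hres⟩ := ih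
    obtain ⟨y, hy⟩ := exists_verschiebungPow_eq hres
    obtain ⟨d, a, hd, hda⟩ := hD (y.coeff 0)
    have hcoeff (i j) : (δ i + verschiebungPow p R m (teichmuller p (d i))).coeff j =
        (δ i).coeff j + (verschiebungPow p R m (teichmuller p (d i))).coeff j := by
      refine coeff_add_of_disjoint _ _ _ fun j => ?_
      rcases lt_or_ge j m with hj | hj
      · exact Or.inr (verschiebungPow_coeff_of_lt _ hj)
      · exact Or.inl (hδm i j hj)
    refine ⟨fun i => δ i + verschiebungPow p R m (teichmuller p (d i)),
      α + verschiebungPow p R m (teichmuller p a), fun i j => ?_, fun i j hj => ?_, ?_⟩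
    · rw [hcoeff]
      rcases eq_or_ne j m with rfl | hj
      · simpa [hδm i j le_rfl, verschiebungPow_coeff_self, teichmuller_coeff_zero] using hd i
      · simpa [verschiebungPow_teichmuller_coeff_of_ne _ hj] using hδ i j
    · rw [hcoeff, hδm i j (by omega), verschiebungPow_teichmuller_coeff_of_ne _ (by omega),
        add_zero]
    · have hsub : β - (∑ i, (δ i + verschiebungPow p R m (teichmuller p (d i))) +
          (frobenius (α + verschiebungPow p R m (teichmuller p a)) -
            (α + verschiebungPow p R m (teichmuller p a)))) =
          verschiebungPow p R m (y - (∑ i, teichmuller p (d i) +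
            (teichmuller p (a ^ p) - teichmuller p a))) := by
        simp only [map_sub, map_add, map_sum, hy, frobenius_verschiebungPow_teichmuller,
          Finset.sum_add_distrib]
        ring
      intro j hj
      rw [hsub]
      rcases (Nat.lt_succ_iff.mp hj).lt_or_eq with hj | rfl
      · exact verschiebungPow_coeff_of_lt _ hj
      · rw [verschiebungPow_coeff_self, ← constantCoeff_apply, map_sub, map_add, map_sub,
          map_sum]
        simp only [constantCoeff_apply, teichmuller_coeff_zero]
        rw [hda, sub_self]

end WittVector

namespace RatFunc

variable {K : Type*} [Field K]

/-- The subring of rational functions whose finite poles lie in the set `s` of monic irreducible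
polynomials. -/
def regularOutside (s : Set K[X]) : Subring (RatFunc K) where
  carrier := {x | ∀ Q : K[X], Q.Monic → Irreducible Q → Q ∣ x.denom → Q ∈ s}
  zero_mem' Q _ hQ h := (hQ.not_isUnit (isUnit_of_dvd_one (by simpa using h))).elim
  one_mem' Q _ hQ h := (hQ.not_isUnit (isUnit_of_dvd_one (by simpa using h))).elim
  add_mem' {x y} hx hy Q hm hQ h :=
    (hQ.prime.dvd_or_dvd (h.trans (denom_add_dvd x y))).elim (hx Q hm hQ) (hy Q hm hQ)
  mul_mem' {x y} hx hy Q hm hQ h :=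
    (hQ.prime.dvd_or_dvd (h.trans (denom_mul_dvd x y))).elim (hx Q hm hQ) (hy Q hm hQ)
  neg_mem' {x} hx Q hm hQ h := hx Q hm hQ <| h.trans <| by
    rw [denom_dvd x.denom_ne_zero]
    exact ⟨-x.num, by rw [map_neg, neg_div, num_div_denom]⟩

theorem algebraMap_mem_regularOutside (s : Set K[X]) (f : K[X]) :
    algebraMap K[X] (RatFunc K) f ∈ regularOutside s := fun Q _ hQ h =>
  (hQ.not_isUnit (isUnit_of_dvd_one (by simpa using h))).elim

theorem div_pow_mem_regularOutside {s : Set K[X]} {P : K[X]} (hPs : P ∈ s) (hm : P.Monic)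
    (hP : Irreducible P) (f : K[X]) (e : ℕ) :
    algebraMap K[X] (RatFunc K) f / algebraMap K[X] (RatFunc K) (P ^ e) ∈ regularOutside s := by
  intro Q hQm hQ h
  have hdvd : Q ∣ P := hQ.prime.dvd_of_dvd_pow (h.trans (denom_div_dvd _ _))
  rwa [eq_of_monic_of_associated hQm hm (hQ.associated_of_dvd hP hdvd)]

theorem exists_denom_dvd_prod_pow {ι : Type*} [Fintype ι] {P : ι → K[X]}
    (hP : ∀ i, P i ≠ 0) {x : RatFunc K} (hx : x ∈ regularOutside (Set.range P)) :
    ∃ N, x.denom ∣ (∏ i, P i) ^ N := by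
  classical
  rw [UniqueFactorizationMonoid.exists_dvd_pow_iff_radical_dvd x.denom_ne_zero,
    UniqueFactorizationMonoid.radical_dvd_iff_primeFactors_subset
      (Finset.prod_ne_zero_iff.mpr fun i _ => hP i)]
  intro Q hQ
  rw [UniqueFactorizationMonoid.mem_primeFactors] at hQ ⊢
  have hirr := UniqueFactorizationMonoid.irreducible_of_normalized_factor Q hQ
  have hnorm := UniqueFactorizationMonoid.normalize_normalized_factor Q hQ
  have hmonic : Q.Monic := by
    rw [← hnorm]; exact monic_normalize hirr.ne_zero
  obtain ⟨i, hi⟩ := hx Q hmonic hirr (UniqueFactorizationMonoid.dvd_of_mem_normalizedFactors hQ)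
  rw [UniqueFactorizationMonoid.mem_normalizedFactors_iff'
    (Finset.prod_ne_zero_iff.mpr fun i _ => hP i)]
  exact ⟨hirr, hnorm, hi ▸ Finset.dvd_prod_of_mem P (Finset.mem_univ i)⟩

/-- Partial fractions with respect to finitely many monic irreducible polynomials. -/
theorem exists_eq_sum_div_pow_add {ι : Type*} [Fintype ι] {P : ι → K[X]}
    (hP : ∀ i, (P i).Monic ∧ Irreducible (P i)) (hinj : Function.Injective P)
    {x : RatFunc K} (hx : x ∈ regularOutside (Set.range P)) :
    ∃ (N : ℕ) (Q : ι → K[X]) (f : K[X]),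
      (∀ i, Q i = 0 ∨ (Q i).natDegree < N * (P i).natDegree) ∧
      x = ∑ i, algebraMap K[X] (RatFunc K) (Q i) / algebraMap K[X] (RatFunc K) (P i ^ N) +
        algebraMap K[X] (RatFunc K) f := by
  obtain ⟨N, hN⟩ := exists_denom_dvd_prod_pow (fun i => (hP i).1.ne_zero) hx
  rw [denom_dvd (pow_ne_zero _ (Finset.prod_ne_zero_iff.mpr fun i _ => (hP i).1.ne_zero))] at hN
  obtain ⟨g, rfl⟩ := hN
  obtain ⟨f, Q, hQ, h⟩ := div_prod_eq_quo_add_sum_rem_div (RatFunc K) g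
    (g := fun i => P i ^ N) (s := Finset.univ) (fun i _ => (hP i).1.pow N) fun i _ j _ hij =>
      ((hP i).2.coprime_iff_not_dvd.mpr fun hdvd => hij <| hinj <|
        eq_of_monic_of_associated (hP i).1 (hP j).1
          ((hP i).2.associated_of_dvd (hP j).2 hdvd)).pow
  refine ⟨N, Q, f, fun i => or_iff_not_imp_left.mpr fun h0 => ?_, ?_⟩
  · have := natDegree_lt_natDegree h0 (hQ i (Finset.mem_univ i))
    rwa [natDegree_pow] at this
  · rw [add_comm, ← Finset.prod_pow, map_prod]
    exact h

end RatFunc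

section ArtinSchreier

variable (p : ℕ) [Fact p.Prime] {K : Type*} [Field K] [Finite K] [CharP K p]

theorem Polynomial.exists_dvd_sub_pow_of_irreducible {P : K[X]} (hm : P.Monic)
    (hP : Irreducible P) (Q : K[X]) :
    ∃ B : K[X], B.natDegree < P.natDegree ∧ P ∣ Q - B ^ p := by
  have : Fact (Irreducible P) := ⟨hP⟩
  have := hm.finite_adjoinRoot
  have : Finite (AdjoinRoot P) := Module.finite_of_finite K
  have : CharP (AdjoinRoot P) p := charP_of_injective_algebraMap (algebraMap K _).injective p
  obtain ⟨b, hb⟩ := Finite.surjective_of_injective (frobenius_inj (AdjoinRoot P) p)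
    (AdjoinRoot.mk P Q)
  obtain ⟨B, rfl⟩ := AdjoinRoot.mk_surjective b
  refine ⟨B %ₘ P, natDegree_modByMonic_lt B hm fun h => hP.not_isUnit (h ▸ isUnit_one), ?_⟩
  rw [← AdjoinRoot.mk_eq_mk, ← hb, frobenius_def, map_pow]
  congr 1
  rw [AdjoinRoot.mk_eq_mk]
  exact ⟨B /ₘ P, by rw [sub_eq_iff_eq_add, add_comm, modByMonic_add_div]⟩

/-- A polynomial over a finite field of characteristic `p` is, modulo `a ^ p - a`, either constant
or of degree prime to `p`. -/
theorem Polynomial.exists_eq_add_pow_sub (f : K[X]) :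
    ∃ g a : K[X], (g.natDegree = 0 ∨ ¬ p ∣ g.natDegree) ∧ f = g + (a ^ p - a) := by
  have hp : p.Prime := Fact.out
  induction h : f.natDegree using Nat.strong_induction_on generalizing f with
  | _ N ih =>
  subst h
  by_cases hf : f.natDegree = 0 ∨ ¬ p ∣ f.natDegree
  · exact ⟨f, 0, hf, by simp [hp.ne_zero]⟩
  · push Not at hf
    obtain ⟨hf0, m, hm⟩ := hf
    have hmpos : 0 < m := Nat.pos_of_ne_zero fun h => hf0 (by simp [hm, h])
    have hlt : m < f.natDegree := hm ▸ lt_mul_of_one_lt_left hmpos hp.one_lt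
    obtain ⟨b, hb⟩ := Finite.surjective_of_injective (frobenius_inj K p) f.leadingCoeff
    have hpow : (C b * X ^ m) ^ p = C f.leadingCoeff * X ^ f.natDegree := by
      rw [← hb, frobenius_def, mul_pow, ← C_pow, ← pow_mul, hm, mul_comm m]
    have hdeg : (f.eraseLead + C b * X ^ m).natDegree < f.natDegree := by
      refine (natDegree_add_le _ _).trans_lt (max_lt ?_ ?_)
      · exact f.eraseLead_natDegree_le.trans_lt (by omega)
      · exact (natDegree_C_mul_X_pow_le b m).trans_lt hlt
    obtain ⟨g, a, hg, h⟩ := ih _ hdeg _ rfl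
    refine ⟨g, a + C b * X ^ m, hg, ?_⟩
    rw [add_pow_char, hpow]
    linear_combination h - f.eraseLead_add_C_mul_X_pow

/-- A proper fraction `Q / P ^ e` over a finite field of characteristic `p` is, modulo `a ^ p - a`,
either zero or a reduced proper fraction whose denominator `P ^ e'` has `e'` prime to `p`. -/
theorem RatFunc.exists_div_pow_eq_add_pow_sub {P : K[X]} (hm : P.Monic) (hP : Irreducible P)
    (e : ℕ) (Q : K[X]) (hQ : Q.natDegree < e * P.natDegree) :
    ∃ (d : RatFunc K) (A : K[X]) (N : ℕ),
      (d = 0 ∨ ∃ (Q : K[X]) (e : ℕ), 1 ≤ e ∧ ¬ p ∣ e ∧ IsCoprime Q P ∧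
          Q.natDegree < e * P.natDegree ∧
          d = algebraMap K[X] (RatFunc K) Q / algebraMap K[X] (RatFunc K) (P ^ e)) ∧
      algebraMap K[X] (RatFunc K) Q / algebraMap K[X] (RatFunc K) (P ^ e) = d +
        ((algebraMap K[X] (RatFunc K) A / algebraMap K[X] (RatFunc K) (P ^ N)) ^ p -
          algebraMap K[X] (RatFunc K) A / algebraMap K[X] (RatFunc K) (P ^ N)) := by
  have hp : p.Prime := Fact.out
  induction e generalizing Q with
  | zero => simp at hQ
  | succ e ih =>
  set φ := algebraMap K[X] (RatFunc K)
  have hφP : φ P ≠ 0 := by simpa [φ] using hm.ne_zero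
  have hPdeg : 0 < P.natDegree := hP.natDegree_pos
  rcases eq_or_ne Q 0 with rfl | hQ0
  · exact ⟨0, 0, 0, Or.inl rfl, by simp [hp.ne_zero]⟩
  by_cases hdvd : P ∣ Q
  · obtain ⟨Q', rfl⟩ := hdvd
    have hQ' : Q'.natDegree < e * P.natDegree := by
      rw [natDegree_mul hm.ne_zero (right_ne_zero_of_mul hQ0), add_mul] at hQ
      omega
    have hcancel : φ (P * Q') / φ (P ^ (e + 1)) = φ Q' / φ (P ^ e) := by
      rw [pow_succ', map_mul, map_mul, mul_div_mul_left _ _ hφP]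
    rw [hcancel]
    exact ih Q' hQ'
  have hcop : IsCoprime Q P := (hP.coprime_iff_not_dvd.mpr hdvd).symm
  by_cases hpe : p ∣ e + 1
  · obtain ⟨m, hpm⟩ := hpe
    obtain ⟨B, hB, R, hR⟩ := exists_dvd_sub_pow_of_irreducible p hm hP Q
    have hm0 : 0 < m := Nat.pos_of_ne_zero fun h => by simp [h] at hpm
    have hme : m ≤ e := by nlinarith [hp.two_le]
    have hRdeg : R.natDegree < e * P.natDegree := by
      rcases eq_or_ne R 0 with rfl | hR0
      · simpa using ⟨by omega, hPdeg⟩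
      have h1 : (P * R).natDegree < (e + 1) * P.natDegree := by
        rw [← hR]
        refine (natDegree_sub_le _ _).trans_lt (max_lt hQ ?_)
        rw [natDegree_pow, hpm, mul_assoc]
        exact Nat.mul_lt_mul_of_pos_left (hB.trans_le (Nat.le_mul_of_pos_left _ hm0)) hp.pos
      rw [natDegree_mul hm.ne_zero hR0, add_mul] at h1
      omega
    have hBdeg : (B * P ^ (e - m)).natDegree < e * P.natDegree := by
      obtain ⟨i, rfl⟩ := Nat.exists_eq_add_of_le hme
      refine natDegree_mul_le.trans_lt ?_
      rw [natDegree_pow, Nat.add_sub_cancel_left, add_mul]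
      have := Nat.le_mul_of_pos_left P.natDegree hm0
      omega
    obtain ⟨d, A, N, hd, h⟩ := ih (R + B * P ^ (e - m))
      ((natDegree_add_le _ _).trans_lt (max_lt hRdeg hBdeg))
    refine ⟨d, A * P ^ m + B * P ^ N, N + m, hd, ?_⟩
    have hsplit : φ (A * P ^ m + B * P ^ N) / φ (P ^ (N + m)) =
        φ A / φ (P ^ N) + φ B / φ (P ^ m) := by
      simp only [map_add, map_mul, map_pow]
      field_simp
      ring
    have hpow : (φ B / φ (P ^ m)) ^ p = φ (B ^ p) / φ (P ^ (e + 1)) := by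
      rw [div_pow, ← map_pow, ← map_pow, ← pow_mul, hpm, mul_comm m]
    have hQe : φ Q / φ (P ^ (e + 1)) = φ R / φ (P ^ e) + φ (B ^ p) / φ (P ^ (e + 1)) := by
      rw [show Q = P * R + B ^ p by rw [← hR]; ring]
      simp only [map_add, map_mul, map_pow]
      field_simp
      ring
    have hBm : φ (R + B * P ^ (e - m)) / φ (P ^ e) = φ R / φ (P ^ e) + φ B / φ (P ^ m) := by
      obtain ⟨i, rfl⟩ := Nat.exists_eq_add_of_le hme
      simp only [map_add, map_mul, map_pow, Nat.add_sub_cancel_left]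
      field_simp
      ring
    have : CharP (RatFunc K) p := charP_of_injective_algebraMap (algebraMap K _).injective p
    rw [hsplit, add_pow_char, hpow]
    linear_combination h + hQe - hBm
  · exact ⟨_, 0, 0, Or.inr ⟨Q, e + 1, by omega, hpe, hcop, hQ, rfl⟩, by simp [hp.ne_zero]⟩

end ArtinSchreier

theorem wittComponentPow_truncate_map {p : ℕ} [Fact p.Prime] {R S : Type*} [CommRing R]
    [CommRing S] [CharP R p] (g : R →+* S) (n : ℕ) (x : WittVector p R) :
    wittComponentPow p n (WittVector.truncate n (WittVector.map g x)) =
      WittVector.truncate n (WittVector.map g (WittVector.frobenius x)) :=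
  TruncatedWittVector.ext fun i => by
    simp [wittComponentPow, WittVector.coeff_truncate, WittVector.map_coeff,
      WittVector.coeff_frobenius_charP]

/-- (Normalization of Artin–Schreier–Witt equations over `k = 𝔽_q(T)`.)
If all finite poles of the components of `β⃗ ∈ W_n(k)` lie among distinct monic
irreducibles `P_1, …, P_r`, then `β⃗ = δ⃗_1 ⊞ ⋯ ⊞ δ⃗_r ⊞ μ⃗ ⊞ (F(α⃗) ⊖ α⃗)` where each
component of `δ⃗_i` is `0` or `Q/P_i^e` with `p ∤ e`, `gcd(Q, P_i) = 1`,
`deg Q < e·deg P_i`, and each component of `μ⃗` is a polynomial that is constant or of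
degree prime to `p`. -/
theorem artinSchreierWitt_normalization
    (p : ℕ) [Fact p.Prime] (Fq : Type*) [Field Fq] [Fintype Fq] [CharP Fq p]
    (n : ℕ) (hn : 1 ≤ n)
    (β : TruncatedWittVector p n (RatFunc Fq))
    (r : ℕ) (P : Fin r → Polynomial Fq)
    (hP : ∀ i, (P i).Monic ∧ Irreducible (P i)) (hPinj : Function.Injective P)
    (hβ : ∀ j : Fin n, ∀ Q : Polynomial Fq, Q.Monic → Irreducible Q →
      Q ∣ (β.coeff j).denom → ∃ i, P i = Q) :
    ∃ (α μ : TruncatedWittVector p n (RatFunc Fq))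
      (δ : Fin r → TruncatedWittVector p n (RatFunc Fq)),
      β = (∑ i, δ i) + μ + (wittComponentPow p n α - α) ∧
      (∀ (i : Fin r) (j : Fin n),
        (δ i).coeff j = 0 ∨
        ∃ (Q : Polynomial Fq) (e : ℕ), 1 ≤ e ∧ ¬ p ∣ e ∧ IsCoprime Q (P i) ∧
          Q.natDegree < e * (P i).natDegree ∧
          (δ i).coeff j = algebraMap (Polynomial Fq) (RatFunc Fq) Q /
            algebraMap (Polynomial Fq) (RatFunc Fq) (P i ^ e)) ∧
      (∀ j : Fin n, ∃ f : Polynomial Fq,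
        μ.coeff j = algebraMap (Polynomial Fq) (RatFunc Fq) f ∧
        (f.natDegree = 0 ∨ ¬ p ∣ f.natDegree)) := by
  have hp : p.Prime := Fact.out
  have : CharP (RatFunc Fq) p := charP_of_injective_algebraMap (algebraMap Fq _).injective p
  let S := RatFunc.regularOutside (Set.range P)
  let φ := algebraMap (Polynomial Fq) (RatFunc Fq)
  have hPS (i Q e) : φ Q / φ (P i ^ e) ∈ S :=
    RatFunc.div_pow_mem_regularOutside (Set.mem_range_self i) (hP i).1 (hP i).2 Q e
  let D : Option (Fin r) → Set S := fun o => o.elim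
    {x | ∃ f : Polynomial Fq, (x : RatFunc Fq) = φ f ∧ (f.natDegree = 0 ∨ ¬ p ∣ f.natDegree)}
    fun i => {x | (x : RatFunc Fq) = 0 ∨ ∃ (Q : Polynomial Fq) (e : ℕ), 1 ≤ e ∧ ¬ p ∣ e ∧
      IsCoprime Q (P i) ∧ Q.natDegree < e * (P i).natDegree ∧
      (x : RatFunc Fq) = φ Q / φ (P i ^ e)}
  have hD0 : ∀ o, 0 ∈ D o := by
    rintro (_ | i)
    · exact ⟨0, by simp, by simp⟩
    · exact Or.inl rfl
  have hD (c : S) : ∃ (d : Option (Fin r) → S) (a : S),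
      (∀ o, d o ∈ D o) ∧ c = ∑ o, d o + (a ^ p - a) := by
    obtain ⟨N, Q, f, hQ, hc⟩ := RatFunc.exists_eq_sum_div_pow_add hP hPinj c.2
    obtain ⟨g, b, hg, hf⟩ := Polynomial.exists_eq_add_pow_sub p f
    have hfrac (i : Fin r) : ∃ d a : S, d ∈ D (some i) ∧
        φ (Q i) / φ (P i ^ N) = d + ((a : RatFunc Fq) ^ p - a) := by
      rcases hQ i with h0 | hlt
      · exact ⟨0, 0, hD0 _, by simp [h0, hp.ne_zero]⟩
      · obtain ⟨d, A, M, hd, h⟩ :=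
          RatFunc.exists_div_pow_eq_add_pow_sub p (hP i).1 (hP i).2 N (Q i) hlt
        have hdS : d ∈ S := by
          rcases hd with rfl | ⟨Q, e, -, -, -, -, rfl⟩
          · exact S.zero_mem
          · exact hPS i Q e
        exact ⟨⟨d, hdS⟩, ⟨_, hPS i A M⟩, hd, h⟩
    choose d a hd ha using hfrac
    let toS (f : Polynomial Fq) : S := ⟨φ f, RatFunc.algebraMap_mem_regularOutside _ f⟩
    refine ⟨fun o => o.elim (toS g) d, ∑ i, a i + toS b, ?_, Subtype.ext ?_⟩
    · rintro (_ | i)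
      · exact ⟨g, rfl, hg⟩
      · exact hd i
    · have hsum : (∑ i, (a i : RatFunc Fq)) ^ p = ∑ i, (a i : RatFunc Fq) ^ p := sum_pow_char p _ _
      rw [hc, Finset.sum_congr rfl fun i _ => ha i, hf, Fintype.sum_option]
      simp only [Option.elim, toS, φ, Subring.coe_add, AddSubgroupClass.coe_sub, Subring.coe_pow,
        AddSubmonoidClass.coe_finsetSum, map_add, map_sub, map_pow, add_pow_char, hsum,
        Finset.sum_add_distrib, Finset.sum_sub_distrib]
      ring
  let b : WittVector p S := WittVector.mk p fun j =>
    if h : j < n then ⟨β.coeff ⟨j, h⟩, fun Q hm hQ hdvd => hβ _ Q hm hQ hdvd⟩ else 0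
  obtain ⟨δ, α, hδ, -, hres⟩ := WittVector.exists_sum_add_frobenius_sub D hD0 hD b n
  let τ : WittVector p S →+* TruncatedWittVector p n (RatFunc Fq) :=
    (WittVector.truncate n).comp (WittVector.map S.subtype)
  have hτ (x : WittVector p S) (j : Fin n) : (τ x).coeff j = x.coeff j := by
    simp [τ, WittVector.coeff_truncate, WittVector.map_coeff]
  have hb : τ b = β := TruncatedWittVector.ext fun j => by simp [hτ, b]
  have hτres : τ (b - (∑ o, δ o + (WittVector.frobenius α - α))) = 0 :=
    TruncatedWittVector.ext fun j => by
      rw [hτ, hres j j.2, TruncatedWittVector.coeff_zero, Subring.coe_zero]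
  refine ⟨τ α, τ (δ none), fun i => τ (δ (some i)), ?_, fun i j => ?_, fun j => ?_⟩
  · have hF : wittComponentPow p n (τ α) = τ (WittVector.frobenius α) :=
      wittComponentPow_truncate_map S.subtype n α
    rw [map_sub, hb, sub_eq_zero] at hτres
    rw [hτres, hF, Fintype.sum_option, map_add, map_add, map_sub, map_sum]
    ring
  · rw [hτ]
    exact hδ (some i) j
  · rw [hτ]
    exact hδ none j
end
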